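/- arXiv:1310.7337 — 3 statements merged into one kernel-verified Lean document; each statement's English description precedes it below -/
import Mathlib

section
/- Let E be a matrix factorization of f ∈ Q with chosen connections, and let φⁿ : E → Ω^{(n)}_{Q,df} ⊗_mf E be the composite (∧⊗1_E)∘φ^{(n)}∘φ^{(n−1)}∘⋯∘φ^{(1)}, where φ^{(i)} = 1^{⊗(i−1)} ⊗ φ and φ = (id, At) : E → (Q →^{df∧} Ω¹) ⊗_mf E. Then for each 0 ≤ i ≤ n, the component of φⁿ landing in Ωⁱ ⊗ E equals the binomial coefficient C(n,i) times Atⁱ; that is, φⁿ = Σ_{i=0}^{n} C(n,i)·Atⁱ. -/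
/-!
STATEMENT 5: For a matrix factorization E of f with chosen connections, the composite
φⁿ = (∧⊗1_E)∘φ^{(n)}∘⋯∘φ^{(1)} : E → Ω^{(n)}_{Q,df} ⊗_mf E satisfies
φⁿ = Σ_{i=0}^{n} C(n,i)·Atⁱ.

Here the i-th stage E^{(i)} = (Q →^{df∧} Ω¹)^{⊗i} ⊗ E is realized by the tower
`Tw 0 = E`, `Tw (i+1) = (Q ⊕ Ω¹) ⊗ Tw i`, with φ^{(i+1)} = 1^{⊗ i} ⊗ φ where
φ(e) = (1,0) ⊗ e + At(e), and the wedge map multiplies all the (Q ⊕ Ω¹)-factors into the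
exterior algebra of Ω¹, so that the target Ω^{(n)}_{Q,df} ⊗ E sits inside Λ•Ω¹ ⊗ E.
`Atⁱ : E → Λ•Ω¹ ⊗ E` is the i-fold iterate of the Atiyah class with the resulting
one-forms multiplied together (At⁰ = id).
-/

open TensorProduct

universe u
variable (k Q : Type u) [CommRing k] [CommRing Q] [Algebra k Q]

structure Conn (k Q E : Type u) [CommRing k] [CommRing Q] [Algebra k Q]
    [AddCommGroup E] [Module Q E] where
  toFun : E → (Ω[Q⁄k] ⊗[Q] E)
  map_add : ∀ x y, toFun (x + y) = toFun x + toFun y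
  leibniz : ∀ (q : Q) (x : E),
    toFun (q • x) = (KaehlerDifferential.D k Q) q ⊗ₜ[Q] x + q • toFun x

/-- The tower `Tw i` realizing `(Q →^{df∧} Ω¹)^{⊗ i} ⊗_mf E` (underlying modules). -/
noncomputable def Tw (E : Type u) [AddCommGroup E] [Module Q E] : ℕ → ModuleCat.{u} Q
  | 0 => ModuleCat.of Q E
  | (i+1) => ModuleCat.of Q ((Q × Ω[Q⁄k]) ⊗[Q] (Tw E i))

/-- `φ^{(i+1)} = 1^{⊗ i} ⊗ φ` where `φ = (id, At)`. -/
noncomputable def Phi (E : Type u) [AddCommGroup E] [Module Q E]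
    (At : E →ₗ[Q] Ω[Q⁄k] ⊗[Q] E) :
    ∀ i, (Tw k Q E i) →ₗ[Q] (Tw k Q E (i+1))
  | 0 => TensorProduct.mk Q (Q × Ω[Q⁄k]) E ((1 : Q), (0 : Ω[Q⁄k]))
      + (TensorProduct.map (LinearMap.inr Q Q (Ω[Q⁄k])) LinearMap.id) ∘ₗ At
  | (i+1) => LinearMap.lTensor (Q × Ω[Q⁄k]) (Phi E At i)

/-- The composite `φ^{(n)} ∘ ⋯ ∘ φ^{(1)} : E → E^{(n)}`. -/
noncomputable def psiTw (E : Type u) [AddCommGroup E] [Module Q E]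
    (At : E →ₗ[Q] Ω[Q⁄k] ⊗[Q] E) : ∀ n, E →ₗ[Q] Tw k Q E n
  | 0 => LinearMap.id
  | (n+1) => Phi k Q E At n ∘ₗ psiTw E At n

/-- `Q ⊕ Ω¹ → Λ•Ω¹`, `(q, ω) ↦ q + ω`. -/
noncomputable def jQ : (Q × Ω[Q⁄k]) →ₗ[Q] ExteriorAlgebra Q (Ω[Q⁄k]) :=
  (Algebra.linearMap Q (ExteriorAlgebra Q (Ω[Q⁄k]))) ∘ₗ LinearMap.fst Q Q (Ω[Q⁄k])
    + (ExteriorAlgebra.ι Q) ∘ₗ LinearMap.snd Q Q (Ω[Q⁄k])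

noncomputable def stepL (E : Type u) [AddCommGroup E] [Module Q E] :
    ((Q × Ω[Q⁄k]) ⊗[Q] (ExteriorAlgebra Q (Ω[Q⁄k]) ⊗[Q] E)) →ₗ[Q]
      (ExteriorAlgebra Q (Ω[Q⁄k]) ⊗[Q] E) :=
  (TensorProduct.map
      (TensorProduct.lift ((LinearMap.mul Q (ExteriorAlgebra Q (Ω[Q⁄k]))).comp (jQ k Q)))
      LinearMap.id) ∘ₗ
    (TensorProduct.assoc Q (Q × Ω[Q⁄k]) (ExteriorAlgebra Q (Ω[Q⁄k])) E).symm.toLinearMap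

/-- The wedge map `∧ ⊗ 1_E : E^{(n)} → Λ•Ω¹ ⊗ E`. -/
noncomputable def Wn (E : Type u) [AddCommGroup E] [Module Q E] :
    ∀ i, (Tw k Q E i) →ₗ[Q] (ExteriorAlgebra Q (Ω[Q⁄k]) ⊗[Q] E)
  | 0 => TensorProduct.mk Q (ExteriorAlgebra Q (Ω[Q⁄k])) E 1
  | (i+1) => stepL k Q E ∘ₗ LinearMap.lTensor (Q × Ω[Q⁄k]) (Wn E i)

/-- `Λ•Ω¹ ⊗ (Ω¹ ⊗ E) → Λ•Ω¹ ⊗ E`, multiplying the middle one-form in from the right. -/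
noncomputable def stepMul (E : Type u) [AddCommGroup E] [Module Q E] :
    (ExteriorAlgebra Q (Ω[Q⁄k]) ⊗[Q] (Ω[Q⁄k] ⊗[Q] E)) →ₗ[Q]
      (ExteriorAlgebra Q (Ω[Q⁄k]) ⊗[Q] E) :=
  (TensorProduct.map
      (TensorProduct.lift ((LinearMap.mul Q (ExteriorAlgebra Q (Ω[Q⁄k]))).compl₂
        (ExteriorAlgebra.ι Q)))
      LinearMap.id) ∘ₗ
    (TensorProduct.assoc Q (ExteriorAlgebra Q (Ω[Q⁄k])) (Ω[Q⁄k]) E).symm.toLinearMap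

/-- `Atⁱ : E → Λ•Ω¹ ⊗ E`. -/
noncomputable def atIter (E : Type u) [AddCommGroup E] [Module Q E]
    (At : E →ₗ[Q] Ω[Q⁄k] ⊗[Q] E) :
    ℕ → (E →ₗ[Q] ExteriorAlgebra Q (Ω[Q⁄k]) ⊗[Q] E)
  | 0 => TensorProduct.mk Q (ExteriorAlgebra Q (Ω[Q⁄k])) E 1
  | (i+1) => stepMul k Q E ∘ₗ
      (LinearMap.lTensor (ExteriorAlgebra Q (Ω[Q⁄k])) At) ∘ₗ atIter E At i

section WedgeEnd

variable {R M E : Type*} [CommRing R] [AddCommGroup M] [Module R M] [AddCommMonoid E]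
  [Module R E]

/-- The endomorphism of the left `Λ•M`-module `Λ•M ⊗ E` extending `θ : E → M ⊗ E`, that is
`a ⊗ e ↦ a ∧ θ e`. For `θ` the Atiyah class, its powers applied to `1 ⊗ e` are the `Atⁱ e`. -/
noncomputable def wedgeEnd (θ : E →ₗ[R] M ⊗[R] E) :
    Module.End (ExteriorAlgebra R M) (ExteriorAlgebra R M ⊗[R] E) :=
  TensorProduct.AlgebraTensorModule.lift <|
    LinearMap.toSpanSingleton (ExteriorAlgebra R M) (E →ₗ[R] ExteriorAlgebra R M ⊗[R] E) <|
      (ExteriorAlgebra.ι R).rTensor E ∘ₗ θ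

theorem wedgeEnd_tmul (θ : E →ₗ[R] M ⊗[R] E) (a : ExteriorAlgebra R M) (e : E) :
    wedgeEnd θ (a ⊗ₜ e) = a • (ExteriorAlgebra.ι R).rTensor E (θ e) :=
  rfl

end WedgeEnd

section Tower

variable {k Q} {E : Type u} [AddCommGroup E] [Module Q E]

theorem stepL_tmul (p : Q × Ω[Q⁄k]) (x : ExteriorAlgebra Q (Ω[Q⁄k]) ⊗[Q] E) :
    stepL k Q E (p ⊗ₜ x) = jQ k Q p • x := by
  induction x with
  | zero => simp
  | add x y hx hy => rw [TensorProduct.tmul_add, map_add, hx, hy, smul_add]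
  | tmul a e => simp [stepL, TensorProduct.smul_tmul']

theorem stepMul_tmul (a : ExteriorAlgebra Q (Ω[Q⁄k])) (t : Ω[Q⁄k] ⊗[Q] E) :
    stepMul k Q E (a ⊗ₜ t) = a • (ExteriorAlgebra.ι Q).rTensor E t := by
  induction t with
  | zero => simp
  | add s t hs ht => rw [TensorProduct.tmul_add, map_add, hs, ht, map_add, smul_add]
  | tmul ω e => simp [stepMul, TensorProduct.smul_tmul']

theorem stepMul_lTensor (θ : E →ₗ[Q] Ω[Q⁄k] ⊗[Q] E)
    (x : ExteriorAlgebra Q (Ω[Q⁄k]) ⊗[Q] E) :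
    stepMul k Q E (θ.lTensor _ x) = wedgeEnd θ x := by
  induction x with
  | zero => simp
  | add x y hx hy => simp only [map_add, hx, hy]
  | tmul a e => rw [LinearMap.lTensor_tmul, stepMul_tmul, wedgeEnd_tmul]

theorem atIter_apply_eq_wedgeEnd_pow (θ : E →ₗ[Q] Ω[Q⁄k] ⊗[Q] E) (i : ℕ) (e : E) :
    atIter k Q E θ i e = (wedgeEnd θ ^ i) (1 ⊗ₜ e) := by
  induction i with
  | zero => rfl
  | succ i ih =>
    calc atIter k Q E θ (i + 1) e
      _ = stepMul k Q E (θ.lTensor _ (atIter k Q E θ i e)) := rfl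
      _ = (wedgeEnd θ ^ (i + 1)) (1 ⊗ₜ e) := by
        rw [stepMul_lTensor, ih, pow_succ', Module.End.mul_apply]

theorem Wn_succ_tmul (n : ℕ) (p : Q × Ω[Q⁄k]) (x : Tw k Q E n) :
    Wn k Q E (n + 1) (p ⊗ₜ[Q] x) = jQ k Q p • Wn k Q E n x :=
  stepL_tmul p (Wn k Q E n x)

theorem Wn_one_eq_rTensor : Wn k Q E 1 = (jQ k Q).rTensor E :=
  TensorProduct.ext' fun p (e : E) ↦
    calc Wn k Q E 1 (p ⊗ₜ[Q] e)
      _ = jQ k Q p • (1 ⊗ₜ e) := Wn_succ_tmul 0 p e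
      _ = jQ k Q p ⊗ₜ e := by rw [TensorProduct.smul_tmul', smul_eq_mul, mul_one]

theorem jQ_one_zero : jQ k Q (1, 0) = 1 := by
  simp [jQ]

theorem jQ_comp_inr : jQ k Q ∘ₗ LinearMap.inr Q Q (Ω[Q⁄k]) = ExteriorAlgebra.ι Q := by
  ext
  simp [jQ]

theorem Wn_one_Phi_zero (θ : E →ₗ[Q] Ω[Q⁄k] ⊗[Q] E) (e : E) :
    Wn k Q E 1 (Phi k Q E θ 0 e) = 1 ⊗ₜ e + wedgeEnd θ (1 ⊗ₜ e) := by
  calc Wn k Q E 1 (Phi k Q E θ 0 e)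
    _ = (jQ k Q).rTensor E ((1, 0) ⊗ₜ e + (LinearMap.inr Q Q (Ω[Q⁄k])).rTensor E (θ e)) :=
        DFunLike.congr_fun Wn_one_eq_rTensor _
    _ = 1 ⊗ₜ e + wedgeEnd θ (1 ⊗ₜ e) := by
        rw [map_add, LinearMap.rTensor_tmul, jQ_one_zero, ← LinearMap.rTensor_comp_apply,
          jQ_comp_inr, wedgeEnd_tmul, one_smul]

/-- After wedging, the factors to the left of `φ` act by left multiplication; these commute with
`wedgeEnd θ` because it is `Λ•Ω¹`-linear. -/
theorem Wn_succ_comp_Phi (θ : E →ₗ[Q] Ω[Q⁄k] ⊗[Q] E) (n : ℕ) :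
    Wn k Q E (n + 1) ∘ₗ Phi k Q E θ n =
      (1 + wedgeEnd θ).restrictScalars Q ∘ₗ Wn k Q E n := by
  induction n with
  | zero => exact LinearMap.ext fun e ↦ Wn_one_Phi_zero θ e
  | succ n ih =>
    refine TensorProduct.ext' fun p x ↦ ?_
    calc Wn k Q E (n + 2) (Phi k Q E θ (n + 1) (p ⊗ₜ[Q] x))
      _ = jQ k Q p • Wn k Q E (n + 1) (Phi k Q E θ n x) := Wn_succ_tmul (n + 1) p _
      _ = jQ k Q p • (1 + wedgeEnd θ) (Wn k Q E n x) :=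
          congrArg (jQ k Q p • ·) (DFunLike.congr_fun ih x)
      _ = (1 + wedgeEnd θ) (Wn k Q E (n + 1) (p ⊗ₜ[Q] x)) := by rw [← map_smul, Wn_succ_tmul]

theorem Wn_psiTw_apply_eq_one_add_wedgeEnd_pow (θ : E →ₗ[Q] Ω[Q⁄k] ⊗[Q] E) (n : ℕ) (e : E) :
    Wn k Q E n (psiTw k Q E θ n e) = ((1 + wedgeEnd θ) ^ n) (1 ⊗ₜ e) := by
  induction n with
  | zero => rfl
  | succ n ih =>
    calc Wn k Q E (n + 1) (psiTw k Q E θ (n + 1) e)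
      _ = (1 + wedgeEnd θ) (Wn k Q E n (psiTw k Q E θ n e)) :=
        DFunLike.congr_fun (Wn_succ_comp_Phi θ n) _
      _ = ((1 + wedgeEnd θ) ^ (n + 1)) (1 ⊗ₜ e) := by rw [ih, pow_succ', Module.End.mul_apply]

theorem phi_n_eq_sum_binomial_atiyah_powers_general (θ : E →ₗ[Q] Ω[Q⁄k] ⊗[Q] E) (n : ℕ) :
    Wn k Q E n ∘ₗ psiTw k Q E θ n =
      ∑ i ∈ Finset.range (n + 1), n.choose i • atIter k Q E θ i := by
  ext e
  have binomial : (1 + wedgeEnd θ) ^ n =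
      ∑ i ∈ Finset.range (n + 1), n.choose i • wedgeEnd θ ^ i := by
    rw [add_comm, (Commute.one_right _).add_pow]
    simp only [one_pow, mul_one, nsmul_eq_mul']
  simp only [LinearMap.comp_apply, Wn_psiTw_apply_eq_one_add_wedgeEnd_pow, binomial,
    LinearMap.sum_apply, LinearMap.smul_apply, atIter_apply_eq_wedgeEnd_pow]

end Tower

theorem phi_n_eq_sum_binomial_atiyah_powers
    (E₀ E₁ : Type u) [AddCommGroup E₀] [Module Q E₀] [AddCommGroup E₁] [Module Q E₁]
    [Module.Finite Q E₀] [Module.Projective Q E₀]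
    [Module.Finite Q E₁] [Module.Projective Q E₁]
    (f : Q) (A : E₁ →ₗ[Q] E₀) (B : E₀ →ₗ[Q] E₁)
    (hAB : ∀ y : E₀, A (B y) = f • y) (hBA : ∀ x : E₁, B (A x) = f • x)
    (na0 : Conn k Q E₀) (na1 : Conn k Q E₁)
    (At₁ : E₁ →ₗ[Q] Ω[Q⁄k] ⊗[Q] E₀) (At₀ : E₀ →ₗ[Q] Ω[Q⁄k] ⊗[Q] E₁)
    (hAt₁ : ∀ x, At₁ x = na0.toFun (A x) - (LinearMap.lTensor (Ω[Q⁄k]) A) (na1.toFun x))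
    (hAt₀ : ∀ y, At₀ y = na1.toFun (B y) - (LinearMap.lTensor (Ω[Q⁄k]) B) (na0.toFun y))
    -- the total Atiyah class on the underlying module E = E₀ ⊕ E₁
    (At : (E₀ × E₁) →ₗ[Q] Ω[Q⁄k] ⊗[Q] (E₀ × E₁))
    (hAt : At = (LinearMap.lTensor (Ω[Q⁄k]) (LinearMap.inr Q E₀ E₁)) ∘ₗ At₀ ∘ₗ
          LinearMap.fst Q E₀ E₁
        + (LinearMap.lTensor (Ω[Q⁄k]) (LinearMap.inl Q E₀ E₁)) ∘ₗ At₁ ∘ₗ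
          LinearMap.snd Q E₀ E₁)
    (n : ℕ) :
    Wn k Q (E₀ × E₁) n ∘ₗ psiTw k Q (E₀ × E₁) At n
      = ∑ i ∈ Finset.range (n + 1), (n.choose i) • atIter k Q (E₀ × E₁) At i :=
  phi_n_eq_sum_binomial_atiyah_powers_general At n
end

section
/- Let k be a commutative ring containing ℚ and Q a smooth k-algebra. For any matrix factorization E of f ∈ Q with chosen connections and Atiyah class At, and for every i ≥ 0, one has df ∧ str(Atⁱ) = 0 in Ω^{i+1}_{Q/k}. -/
/-!
STATEMENT 10: Let k ⊇ ℚ and Q a smooth k-algebra. For any matrix factorization E of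
f ∈ Q with chosen connections and Atiyah class At, and every i ≥ 0,
df ∧ str(Atⁱ) = 0 in Ω^{i+1}_{Q/k} (the wedge being taken in the exterior algebra of
Ω¹_{Q/k}).
-/

open TensorProduct

universe u
variable (k Q : Type u) [CommRing k] [CommRing Q] [Algebra k Q]

/-- Trace, with coefficients in a module `N`, of a map `E → N ⊗ E` on a f.g. projective
module `E`, computed via a presentation of `E` as a retract of `Fin r → Q`. -/
noncomputable def trC {N E : Type u} [AddCommGroup N] [Module Q N]
    [AddCommGroup E] [Module Q E] {r : ℕ}
    (p : (Fin r → Q) →ₗ[Q] E) (s : E →ₗ[Q] (Fin r → Q))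
    (g : E →ₗ[Q] N ⊗[Q] E) : N :=
  ∑ j : Fin r, (TensorProduct.rid Q N)
    ((LinearMap.lTensor N (LinearMap.proj j))
      ((LinearMap.lTensor N s) (g (p (Pi.single j 1)))))

/-- The supertrace of a map `E₀ ⊕ E₁ → N ⊗ (E₀ ⊕ E₁)`: the trace of its `(0,0)`-component
minus the trace of its `(1,1)`-component. -/
noncomputable def strT {N E₀ E₁ : Type u} [AddCommGroup N] [Module Q N]
    [AddCommGroup E₀] [Module Q E₀] [AddCommGroup E₁] [Module Q E₁]
    {r₀ r₁ : ℕ} (p₀ : (Fin r₀ → Q) →ₗ[Q] E₀) (s₀ : E₀ →ₗ[Q] (Fin r₀ → Q))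
    (p₁ : (Fin r₁ → Q) →ₗ[Q] E₁) (s₁ : E₁ →ₗ[Q] (Fin r₁ → Q))
    (T : (E₀ × E₁) →ₗ[Q] N ⊗[Q] (E₀ × E₁)) : N :=
  trC Q p₀ s₀ ((LinearMap.lTensor N (LinearMap.fst Q E₀ E₁)) ∘ₗ T ∘ₗ LinearMap.inl Q E₀ E₁)
    - trC Q p₁ s₁ ((LinearMap.lTensor N (LinearMap.snd Q E₀ E₁)) ∘ₗ T ∘ₗ LinearMap.inr Q E₀ E₁)

/-!
Let `δ` be the odd endomorphism of `E₀ × E₁` with components `A`, `B`. The Leibniz rule turns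
`A ∘ B = B ∘ A = f` into `At ∘ δ + δ ∘ At = df`. The Atiyah class commutes with left
multiplication by `df`, while moving `df` across the `i` one-forms of `Atⁱ` costs `(-1)ⁱ`, so
induction gives `(i + 1) df ∧ Atⁱ = Atⁱ⁺¹ ∘ δ + (-1)ⁱ δ ∘ Atⁱ⁺¹`. For even `i` the right-hand side
is a supercommutator, on which the supertrace vanishes by cyclicity of the trace. For odd `i` the
diagonal components of `Atⁱ` vanish.
-/

section Retract

variable {Q N E : Type*} [CommSemiring Q] [AddCommMonoid N] [Module Q N] [AddCommMonoid E]
  [Module Q E] {r : ℕ}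

lemma sum_smul_apply_single (p : (Fin r → Q) →ₗ[Q] E) (s : E →ₗ[Q] (Fin r → Q))
    (hps : ∀ e, p (s e) = e) (θ : E →ₗ[Q] N) (e : E) :
    ∑ j, s e j • θ (p (Pi.single j 1)) = θ e := by
  conv_rhs => rw [← hps e, pi_eq_sum_univ' (s e)]
  simp only [map_sum, map_smul]

lemma rid_lTensor_eq_sum (p : (Fin r → Q) →ₗ[Q] E) (s : E →ₗ[Q] (Fin r → Q))
    (hps : ∀ e, p (s e) = e) (θ : E →ₗ[Q] Q) (t : N ⊗[Q] E) :
    TensorProduct.rid Q N (θ.lTensor N t) = ∑ j, θ (p (Pi.single j 1)) •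
      TensorProduct.rid Q N ((LinearMap.proj j ∘ₗ s).lTensor N t) := by
  induction t with
  | zero => simp
  | add a b ha hb => simp only [map_add, ha, hb, smul_add, Finset.sum_add_distrib]
  | tmul n e =>
    simp [← sum_smul_apply_single p s hps θ e, Finset.sum_smul, smul_smul, mul_comm]

end Retract

section Odd

variable {Q N E₀ E₁ : Type*} [CommSemiring Q] [AddCommMonoid N] [Module Q N]
  [AddCommMonoid E₀] [Module Q E₀] [AddCommMonoid E₁] [Module Q E₁]

/-- The odd endomorphism of `E₀ × E₁` with components `A : E₁ → E₀` and `B : E₀ → E₁`; for a matrix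
factorization this is its differential. -/
def oddEnd (A : E₁ →ₗ[Q] E₀) (B : E₀ →ₗ[Q] E₁) : (E₀ × E₁) →ₗ[Q] (E₀ × E₁) :=
  (A ∘ₗ LinearMap.snd Q E₀ E₁).prod (B ∘ₗ LinearMap.fst Q E₀ E₁)

lemma fst_comp_oddEnd (A : E₁ →ₗ[Q] E₀) (B : E₀ →ₗ[Q] E₁) :
    LinearMap.fst Q E₀ E₁ ∘ₗ oddEnd A B = A ∘ₗ LinearMap.snd Q E₀ E₁ := rfl

lemma snd_comp_oddEnd (A : E₁ →ₗ[Q] E₀) (B : E₀ →ₗ[Q] E₁) :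
    LinearMap.snd Q E₀ E₁ ∘ₗ oddEnd A B = B ∘ₗ LinearMap.fst Q E₀ E₁ := rfl

lemma oddEnd_comp_inl (A : E₁ →ₗ[Q] E₀) (B : E₀ →ₗ[Q] E₁) :
    oddEnd A B ∘ₗ LinearMap.inl Q E₀ E₁ = LinearMap.inr Q E₀ E₁ ∘ₗ B := by
  ext <;> simp [oddEnd]

lemma oddEnd_comp_inr (A : E₁ →ₗ[Q] E₀) (B : E₀ →ₗ[Q] E₁) :
    oddEnd A B ∘ₗ LinearMap.inr Q E₀ E₁ = LinearMap.inl Q E₀ E₁ ∘ₗ A := by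
  ext <;> simp [oddEnd]

/-- The odd map `E₀ × E₁ → N ⊗ (E₀ × E₁)` with components `φ₀ : E₀ → N ⊗ E₁` and
`φ₁ : E₁ → N ⊗ E₀`: the version of `oddEnd` with coefficients in `N`. -/
noncomputable def oddForm (φ₀ : E₀ →ₗ[Q] N ⊗[Q] E₁) (φ₁ : E₁ →ₗ[Q] N ⊗[Q] E₀) :
    (E₀ × E₁) →ₗ[Q] N ⊗[Q] (E₀ × E₁) :=
  (LinearMap.inr Q E₀ E₁).lTensor N ∘ₗ φ₀ ∘ₗ LinearMap.fst Q E₀ E₁ +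
    (LinearMap.inl Q E₀ E₁).lTensor N ∘ₗ φ₁ ∘ₗ LinearMap.snd Q E₀ E₁

lemma oddForm_comp_inl (φ₀ : E₀ →ₗ[Q] N ⊗[Q] E₁) (φ₁ : E₁ →ₗ[Q] N ⊗[Q] E₀) :
    oddForm φ₀ φ₁ ∘ₗ LinearMap.inl Q E₀ E₁ = (LinearMap.inr Q E₀ E₁).lTensor N ∘ₗ φ₀ := by
  ext
  simp [oddForm]

lemma oddForm_comp_inr (φ₀ : E₀ →ₗ[Q] N ⊗[Q] E₁) (φ₁ : E₁ →ₗ[Q] N ⊗[Q] E₀) :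
    oddForm φ₀ φ₁ ∘ₗ LinearMap.inr Q E₀ E₁ = (LinearMap.inl Q E₀ E₁).lTensor N ∘ₗ φ₁ := by
  ext
  simp [oddForm]

lemma lTensor_fst_comp_oddForm (φ₀ : E₀ →ₗ[Q] N ⊗[Q] E₁) (φ₁ : E₁ →ₗ[Q] N ⊗[Q] E₀) :
    (LinearMap.fst Q E₀ E₁).lTensor N ∘ₗ oddForm φ₀ φ₁ = φ₁ ∘ₗ LinearMap.snd Q E₀ E₁ := by
  simp only [oddForm, LinearMap.comp_add, ← LinearMap.comp_assoc, ← LinearMap.lTensor_comp,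
    LinearMap.fst_comp_inr, LinearMap.fst_comp_inl, LinearMap.lTensor_zero, LinearMap.lTensor_id,
    LinearMap.zero_comp, zero_add, LinearMap.id_comp]

lemma lTensor_snd_comp_oddForm (φ₀ : E₀ →ₗ[Q] N ⊗[Q] E₁) (φ₁ : E₁ →ₗ[Q] N ⊗[Q] E₀) :
    (LinearMap.snd Q E₀ E₁).lTensor N ∘ₗ oddForm φ₀ φ₁ = φ₀ ∘ₗ LinearMap.fst Q E₀ E₁ := by
  simp only [oddForm, LinearMap.comp_add, ← LinearMap.comp_assoc, ← LinearMap.lTensor_comp,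
    LinearMap.snd_comp_inr, LinearMap.snd_comp_inl, LinearMap.lTensor_zero, LinearMap.lTensor_id,
    LinearMap.zero_comp, add_zero, LinearMap.id_comp]

lemma oddForm_supercommutator_oddEnd {φ₀ : E₀ →ₗ[Q] N ⊗[Q] E₁} {φ₁ : E₁ →ₗ[Q] N ⊗[Q] E₀}
    {A : E₁ →ₗ[Q] E₀} {B : E₀ →ₗ[Q] E₁} {a : N}
    (h₀ : φ₁ ∘ₗ B + A.lTensor N ∘ₗ φ₀ = TensorProduct.mk Q N E₀ a)
    (h₁ : φ₀ ∘ₗ A + B.lTensor N ∘ₗ φ₁ = TensorProduct.mk Q N E₁ a) :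
    oddForm φ₀ φ₁ ∘ₗ oddEnd A B + (oddEnd A B).lTensor N ∘ₗ oddForm φ₀ φ₁ =
      TensorProduct.mk Q N (E₀ × E₁) a := by
  refine LinearMap.prod_ext ?_ ?_
  · calc (oddForm φ₀ φ₁ ∘ₗ oddEnd A B + (oddEnd A B).lTensor N ∘ₗ oddForm φ₀ φ₁) ∘ₗ
            LinearMap.inl Q E₀ E₁
        = (LinearMap.inl Q E₀ E₁).lTensor N ∘ₗ (φ₁ ∘ₗ B + A.lTensor N ∘ₗ φ₀) := by
          rw [LinearMap.add_comp, LinearMap.comp_assoc, LinearMap.comp_assoc, oddEnd_comp_inl,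
            oddForm_comp_inl, ← LinearMap.comp_assoc, ← LinearMap.comp_assoc, oddForm_comp_inr,
            ← LinearMap.lTensor_comp, oddEnd_comp_inr, LinearMap.lTensor_comp,
            LinearMap.comp_add, LinearMap.comp_assoc, LinearMap.comp_assoc]
      _ = TensorProduct.mk Q N (E₀ × E₁) a ∘ₗ LinearMap.inl Q E₀ E₁ := by rw [h₀]; rfl
  · calc (oddForm φ₀ φ₁ ∘ₗ oddEnd A B + (oddEnd A B).lTensor N ∘ₗ oddForm φ₀ φ₁) ∘ₗ
            LinearMap.inr Q E₀ E₁
        = (LinearMap.inr Q E₀ E₁).lTensor N ∘ₗ (φ₀ ∘ₗ A + B.lTensor N ∘ₗ φ₁) := by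
          rw [LinearMap.add_comp, LinearMap.comp_assoc, LinearMap.comp_assoc, oddEnd_comp_inr,
            oddForm_comp_inr, ← LinearMap.comp_assoc, ← LinearMap.comp_assoc, oddForm_comp_inl,
            ← LinearMap.lTensor_comp, oddEnd_comp_inl, LinearMap.lTensor_comp,
            LinearMap.comp_add, LinearMap.comp_assoc, LinearMap.comp_assoc]
      _ = TensorProduct.mk Q N (E₀ × E₁) a ∘ₗ LinearMap.inr Q E₀ E₁ := by rw [h₁]; rfl

end Odd

section Trace

variable {Q : Type u} [CommRing Q] {N N' E F E₀ E₁ : Type u}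
  [AddCommGroup N] [Module Q N] [AddCommGroup N'] [Module Q N']
  [AddCommGroup E] [Module Q E] [AddCommGroup F] [Module Q F]
  [AddCommGroup E₀] [Module Q E₀] [AddCommGroup E₁] [Module Q E₁] {r r' r₀ r₁ : ℕ}

lemma trC_eq_sum_rid_lTensor (p : (Fin r → Q) →ₗ[Q] E) (s : E →ₗ[Q] (Fin r → Q))
    (g : E →ₗ[Q] N ⊗[Q] E) :
    trC Q p s g = ∑ j, TensorProduct.rid Q N
      ((LinearMap.proj j ∘ₗ s).lTensor N (g (p (Pi.single j 1)))) := by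
  simp only [trC, LinearMap.lTensor_comp, LinearMap.comp_apply]

lemma trC_add (p : (Fin r → Q) →ₗ[Q] E) (s : E →ₗ[Q] (Fin r → Q)) (g h : E →ₗ[Q] N ⊗[Q] E) :
    trC Q p s (g + h) = trC Q p s g + trC Q p s h := by
  simp only [trC, LinearMap.add_apply, map_add, Finset.sum_add_distrib]

lemma trC_rTensor_comp (p : (Fin r → Q) →ₗ[Q] E) (s : E →ₗ[Q] (Fin r → Q)) (l : N →ₗ[Q] N')
    (g : E →ₗ[Q] N ⊗[Q] E) :
    trC Q p s (l.rTensor E ∘ₗ g) = l (trC Q p s g) := by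
  have rid_natural (θ : E →ₗ[Q] Q) :
      (TensorProduct.rid Q N').toLinearMap ∘ₗ θ.lTensor N' ∘ₗ l.rTensor E =
        l ∘ₗ (TensorProduct.rid Q N).toLinearMap ∘ₗ θ.lTensor N := by
    ext n e
    simp
  simp only [trC_eq_sum_rid_lTensor, map_sum]
  exact Finset.sum_congr rfl fun j _ ↦ LinearMap.congr_fun (rid_natural _) _

lemma trC_lTensor_comp_comm (p : (Fin r → Q) →ₗ[Q] E) (s : E →ₗ[Q] (Fin r → Q))
    (hps : ∀ e, p (s e) = e) (p' : (Fin r' → Q) →ₗ[Q] F) (s' : F →ₗ[Q] (Fin r' → Q))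
    (hps' : ∀ e, p' (s' e) = e) (g : E →ₗ[Q] N ⊗[Q] F) (h : F →ₗ[Q] E) :
    trC Q p s (h.lTensor N ∘ₗ g) = trC Q p' s' (g ∘ₗ h) := by
  let contract (j : Fin r') : N ⊗[Q] F →ₗ[Q] N :=
    (TensorProduct.rid Q N).toLinearMap ∘ₗ (LinearMap.proj j ∘ₗ s').lTensor N
  calc trC Q p s (h.lTensor N ∘ₗ g)
      = ∑ l, TensorProduct.rid Q N
          (((LinearMap.proj l ∘ₗ s) ∘ₗ h).lTensor N (g (p (Pi.single l 1)))) := by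
        simp only [trC_eq_sum_rid_lTensor, LinearMap.lTensor_comp, LinearMap.comp_apply]
    _ = ∑ l, ∑ j, s (h (p' (Pi.single j 1))) l • contract j (g (p (Pi.single l 1))) :=
        Finset.sum_congr rfl fun l _ ↦ rid_lTensor_eq_sum p' s' hps' _ _
    _ = ∑ j, ∑ l, s (h (p' (Pi.single j 1))) l • contract j (g (p (Pi.single l 1))) :=
        Finset.sum_comm
    _ = ∑ j, contract j (g (h (p' (Pi.single j 1)))) :=
        Finset.sum_congr rfl fun j _ ↦ sum_smul_apply_single p s hps (contract j ∘ₗ g) _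
    _ = trC Q p' s' (g ∘ₗ h) := (trC_eq_sum_rid_lTensor p' s' (g ∘ₗ h)).symm

lemma strT_rTensor_comp (p₀ : (Fin r₀ → Q) →ₗ[Q] E₀) (s₀ : E₀ →ₗ[Q] (Fin r₀ → Q))
    (p₁ : (Fin r₁ → Q) →ₗ[Q] E₁) (s₁ : E₁ →ₗ[Q] (Fin r₁ → Q)) (l : N →ₗ[Q] N')
    (T : (E₀ × E₁) →ₗ[Q] N ⊗[Q] (E₀ × E₁)) :
    strT Q p₀ s₀ p₁ s₁ (l.rTensor (E₀ × E₁) ∘ₗ T) = l (strT Q p₀ s₀ p₁ s₁ T) := by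
  have lTensor_comm {G : Type u} [AddCommGroup G] [Module Q G] (u : (E₀ × E₁) →ₗ[Q] G)
      (v : G →ₗ[Q] E₀ × E₁) :
      u.lTensor N' ∘ₗ (l.rTensor (E₀ × E₁) ∘ₗ T) ∘ₗ v =
        l.rTensor G ∘ₗ (u.lTensor N ∘ₗ T ∘ₗ v) := by
    simp only [← LinearMap.comp_assoc, LinearMap.lTensor_comp_rTensor,
      LinearMap.rTensor_comp_lTensor]
  simp only [strT, lTensor_comm, trC_rTensor_comp, map_sub]

lemma strT_supercommutator_oddEnd (p₀ : (Fin r₀ → Q) →ₗ[Q] E₀) (s₀ : E₀ →ₗ[Q] (Fin r₀ → Q))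
    (hps₀ : ∀ e, p₀ (s₀ e) = e) (p₁ : (Fin r₁ → Q) →ₗ[Q] E₁) (s₁ : E₁ →ₗ[Q] (Fin r₁ → Q))
    (hps₁ : ∀ e, p₁ (s₁ e) = e) (A : E₁ →ₗ[Q] E₀) (B : E₀ →ₗ[Q] E₁)
    (T : (E₀ × E₁) →ₗ[Q] N ⊗[Q] (E₀ × E₁)) :
    strT Q p₀ s₀ p₁ s₁ (T ∘ₗ oddEnd A B + (oddEnd A B).lTensor N ∘ₗ T) = 0 := by
  let T₀₁ := (LinearMap.fst Q E₀ E₁).lTensor N ∘ₗ T ∘ₗ LinearMap.inr Q E₀ E₁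
  let T₁₀ := (LinearMap.snd Q E₀ E₁).lTensor N ∘ₗ T ∘ₗ LinearMap.inl Q E₀ E₁
  have block₀₀ : (LinearMap.fst Q E₀ E₁).lTensor N ∘ₗ
      (T ∘ₗ oddEnd A B + (oddEnd A B).lTensor N ∘ₗ T) ∘ₗ LinearMap.inl Q E₀ E₁ =
        T₀₁ ∘ₗ B + A.lTensor N ∘ₗ T₁₀ := by
    simp only [T₀₁, T₁₀, LinearMap.add_comp, LinearMap.comp_add, LinearMap.comp_assoc,
      oddEnd_comp_inl]
    simp only [← LinearMap.comp_assoc, ← LinearMap.lTensor_comp, fst_comp_oddEnd]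
  have block₁₁ : (LinearMap.snd Q E₀ E₁).lTensor N ∘ₗ
      (T ∘ₗ oddEnd A B + (oddEnd A B).lTensor N ∘ₗ T) ∘ₗ LinearMap.inr Q E₀ E₁ =
        T₁₀ ∘ₗ A + B.lTensor N ∘ₗ T₀₁ := by
    simp only [T₀₁, T₁₀, LinearMap.add_comp, LinearMap.comp_add, LinearMap.comp_assoc,
      oddEnd_comp_inr]
    simp only [← LinearMap.comp_assoc, ← LinearMap.lTensor_comp, snd_comp_oddEnd]
  rw [strT, block₀₀, block₁₁, trC_add, trC_add, trC_lTensor_comp_comm p₀ s₀ hps₀ p₁ s₁ hps₁,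
    trC_lTensor_comp_comm p₁ s₁ hps₁ p₀ s₀ hps₀, add_comm, sub_self]

lemma strT_eq_zero_of_diagonal_eq_zero (p₀ : (Fin r₀ → Q) →ₗ[Q] E₀)
    (s₀ : E₀ →ₗ[Q] (Fin r₀ → Q)) (p₁ : (Fin r₁ → Q) →ₗ[Q] E₁) (s₁ : E₁ →ₗ[Q] (Fin r₁ → Q))
    {T : (E₀ × E₁) →ₗ[Q] N ⊗[Q] (E₀ × E₁)}
    (h₀ : (LinearMap.fst Q E₀ E₁).lTensor N ∘ₗ T ∘ₗ LinearMap.inl Q E₀ E₁ = 0)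
    (h₁ : (LinearMap.snd Q E₀ E₁).lTensor N ∘ₗ T ∘ₗ LinearMap.inr Q E₀ E₁ = 0) :
    strT Q p₀ s₀ p₁ s₁ T = 0 := by
  simp [strT, h₀, h₁, trC]

end Trace

section Atiyah

variable {k Q} {E F G E₀ E₁ : Type u} [AddCommGroup E] [Module Q E] [AddCommGroup F] [Module Q F]
  [AddCommGroup G] [Module Q G] [AddCommGroup E₀] [Module Q E₀] [AddCommGroup E₁] [Module Q E₁]

lemma atiyah_comp_add_lTensor_comp_atiyah {f : Q} {A : F →ₗ[Q] E} {B : E →ₗ[Q] F}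
    (hAB : ∀ y, A (B y) = f • y) {nabE : Conn k Q E} {nabF : Conn k Q F}
    {AtF : F →ₗ[Q] Ω[Q⁄k] ⊗[Q] E} {AtE : E →ₗ[Q] Ω[Q⁄k] ⊗[Q] F}
    (hAtF : ∀ x, AtF x = nabE.toFun (A x) - A.lTensor Ω[Q⁄k] (nabF.toFun x))
    (hAtE : ∀ y, AtE y = nabF.toFun (B y) - B.lTensor Ω[Q⁄k] (nabE.toFun y)) :
    AtF ∘ₗ B + A.lTensor Ω[Q⁄k] ∘ₗ AtE =
      TensorProduct.mk Q Ω[Q⁄k] E (KaehlerDifferential.D k Q f) := by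
  have comp_eq_smul_id : A ∘ₗ B = f • LinearMap.id := LinearMap.ext hAB
  ext y
  calc AtF (B y) + A.lTensor Ω[Q⁄k] (AtE y)
      = nabE.toFun (A (B y)) - (A ∘ₗ B).lTensor Ω[Q⁄k] (nabE.toFun y) := by
        rw [hAtF, hAtE, map_sub, sub_add_sub_cancel, LinearMap.lTensor_comp_apply]
    _ = nabE.toFun (f • y) - f • nabE.toFun y := by
        rw [hAB, comp_eq_smul_id, LinearMap.lTensor_smul, LinearMap.lTensor_id,
          LinearMap.smul_apply, LinearMap.id_apply]
    _ = KaehlerDifferential.D k Q f ⊗ₜ y := by rw [nabE.leibniz, add_sub_cancel_right]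

/-- The extension of `φ : E → Ω¹ ⊗ F` to `Λ•Ω¹ ⊗ E → Λ•Ω¹ ⊗ F`, multiplying the one-form produced
by `φ` in from the right; `Atⁱ⁺¹` is the extension of `At` applied after `Atⁱ`. -/
noncomputable def wedgeExtension (φ : E →ₗ[Q] Ω[Q⁄k] ⊗[Q] F) :
    ExteriorAlgebra Q Ω[Q⁄k] ⊗[Q] E →ₗ[Q] ExteriorAlgebra Q Ω[Q⁄k] ⊗[Q] F :=
  stepMul k Q F ∘ₗ φ.lTensor (ExteriorAlgebra Q Ω[Q⁄k])

lemma atIter_succ (At : E →ₗ[Q] Ω[Q⁄k] ⊗[Q] E) (i : ℕ) :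
    atIter k Q E At (i + 1) = wedgeExtension At ∘ₗ atIter k Q E At i := rfl

lemma stepMul_tmul_tmul (w : ExteriorAlgebra Q Ω[Q⁄k]) (a : Ω[Q⁄k]) (e : E) :
    stepMul k Q E (w ⊗ₜ (a ⊗ₜ e)) = (w * ExteriorAlgebra.ι Q a) ⊗ₜ e := by
  simp [stepMul]

lemma wedgeExtension_add (φ φ' : E →ₗ[Q] Ω[Q⁄k] ⊗[Q] F) :
    wedgeExtension (φ + φ') = wedgeExtension φ + wedgeExtension φ' := by
  rw [wedgeExtension, LinearMap.lTensor_add, LinearMap.comp_add]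
  rfl

lemma wedgeExtension_mk (a : Ω[Q⁄k]) :
    wedgeExtension (TensorProduct.mk Q Ω[Q⁄k] E a) =
      (LinearMap.mulRight Q (ExteriorAlgebra.ι Q a)).rTensor E :=
  TensorProduct.ext' fun w e ↦ stepMul_tmul_tmul w a e

lemma wedgeExtension_comp_lTensor (φ : F →ₗ[Q] Ω[Q⁄k] ⊗[Q] G) (h : E →ₗ[Q] F) :
    wedgeExtension φ ∘ₗ h.lTensor (ExteriorAlgebra Q Ω[Q⁄k]) = wedgeExtension (φ ∘ₗ h) := by
  rw [wedgeExtension, LinearMap.comp_assoc, ← LinearMap.lTensor_comp, wedgeExtension]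

lemma lTensor_comp_wedgeExtension (h : F →ₗ[Q] G) (φ : E →ₗ[Q] Ω[Q⁄k] ⊗[Q] F) :
    h.lTensor (ExteriorAlgebra Q Ω[Q⁄k]) ∘ₗ wedgeExtension φ =
      wedgeExtension (h.lTensor Ω[Q⁄k] ∘ₗ φ) := by
  have stepMul_natural : h.lTensor (ExteriorAlgebra Q Ω[Q⁄k]) ∘ₗ stepMul k Q F =
      stepMul k Q G ∘ₗ (h.lTensor Ω[Q⁄k]).lTensor (ExteriorAlgebra Q Ω[Q⁄k]) :=
    TensorProduct.ext_threefold' fun w a e ↦ by simp [stepMul_tmul_tmul]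
  rw [wedgeExtension, ← LinearMap.comp_assoc, stepMul_natural, LinearMap.comp_assoc,
    ← LinearMap.lTensor_comp, wedgeExtension]

lemma wedgeExtension_comp_rTensor_mulLeft (φ : E →ₗ[Q] Ω[Q⁄k] ⊗[Q] F)
    (v : ExteriorAlgebra Q Ω[Q⁄k]) :
    wedgeExtension φ ∘ₗ (LinearMap.mulLeft Q v).rTensor E =
      (LinearMap.mulLeft Q v).rTensor F ∘ₗ wedgeExtension φ := by
  have stepMul_mulLeft : stepMul k Q F ∘ₗ (LinearMap.mulLeft Q v).rTensor (Ω[Q⁄k] ⊗[Q] F) =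
      (LinearMap.mulLeft Q v).rTensor F ∘ₗ stepMul k Q F :=
    TensorProduct.ext_threefold' fun w a e ↦ by simp [stepMul_tmul_tmul, mul_assoc]
  rw [wedgeExtension, LinearMap.comp_assoc, LinearMap.lTensor_comp_rTensor,
    ← LinearMap.rTensor_comp_lTensor, ← LinearMap.comp_assoc, stepMul_mulLeft,
    LinearMap.comp_assoc]

lemma wedgeExtension_supercommutator {At : E →ₗ[Q] Ω[Q⁄k] ⊗[Q] E} {δ : E →ₗ[Q] E} {a : Ω[Q⁄k]}
    (h : At ∘ₗ δ + δ.lTensor Ω[Q⁄k] ∘ₗ At = TensorProduct.mk Q Ω[Q⁄k] E a) :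
    wedgeExtension At ∘ₗ δ.lTensor (ExteriorAlgebra Q Ω[Q⁄k]) +
        δ.lTensor (ExteriorAlgebra Q Ω[Q⁄k]) ∘ₗ wedgeExtension At =
      (LinearMap.mulRight Q (ExteriorAlgebra.ι Q a)).rTensor E := by
  rw [wedgeExtension_comp_lTensor, lTensor_comp_wedgeExtension, ← wedgeExtension_add, h,
    wedgeExtension_mk]

lemma rTensor_mulRight_ι_comp_wedgeExtension (φ : E →ₗ[Q] Ω[Q⁄k] ⊗[Q] F) (a : Ω[Q⁄k]) :
    (LinearMap.mulRight Q (ExteriorAlgebra.ι Q a)).rTensor F ∘ₗ wedgeExtension φ =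
      -(wedgeExtension φ ∘ₗ (LinearMap.mulRight Q (ExteriorAlgebra.ι Q a)).rTensor E) := by
  have stepMul_mulRight :
      (LinearMap.mulRight Q (ExteriorAlgebra.ι Q a)).rTensor F ∘ₗ stepMul k Q F =
        -(stepMul k Q F ∘ₗ
          (LinearMap.mulRight Q (ExteriorAlgebra.ι Q a)).rTensor (Ω[Q⁄k] ⊗[Q] F)) :=
    TensorProduct.ext_threefold' fun w b e ↦ by
      have ι_swap := eq_neg_of_add_eq_zero_left (ExteriorAlgebra.ι_add_mul_swap (R := Q) b a)
      simp [stepMul_tmul_tmul, mul_assoc, ι_swap, TensorProduct.neg_tmul]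
  rw [wedgeExtension, ← LinearMap.comp_assoc, stepMul_mulRight, LinearMap.neg_comp,
    LinearMap.comp_assoc, LinearMap.rTensor_comp_lTensor, ← LinearMap.lTensor_comp_rTensor,
    LinearMap.comp_assoc]

lemma rTensor_mulRight_ι_comp_atIter (At : E →ₗ[Q] Ω[Q⁄k] ⊗[Q] E) (a : Ω[Q⁄k]) (i : ℕ) :
    (LinearMap.mulRight Q (ExteriorAlgebra.ι Q a)).rTensor E ∘ₗ atIter k Q E At i =
      (-1 : Q) ^ i •
        ((LinearMap.mulLeft Q (ExteriorAlgebra.ι Q a)).rTensor E ∘ₗ atIter k Q E At i) := by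
  induction i with
  | zero => ext; simp [atIter]
  | succ i ih =>
    rw [atIter_succ, ← LinearMap.comp_assoc, rTensor_mulRight_ι_comp_wedgeExtension,
      LinearMap.neg_comp, LinearMap.comp_assoc, ih, LinearMap.comp_smul, ← LinearMap.comp_assoc,
      wedgeExtension_comp_rTensor_mulLeft, LinearMap.comp_assoc, pow_succ, mul_neg_one]
    exact (neg_smul ((-1 : Q) ^ i) (_ : E →ₗ[Q] ExteriorAlgebra Q Ω[Q⁄k] ⊗[Q] E)).symm

lemma succ_smul_mulLeft_ι_comp_atIter {At : E →ₗ[Q] Ω[Q⁄k] ⊗[Q] E} {δ : E →ₗ[Q] E} {a : Ω[Q⁄k]}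
    (h : At ∘ₗ δ + δ.lTensor Ω[Q⁄k] ∘ₗ At = TensorProduct.mk Q Ω[Q⁄k] E a) (i : ℕ) :
    (i + 1 : Q) •
        ((LinearMap.mulLeft Q (ExteriorAlgebra.ι Q a)).rTensor E ∘ₗ atIter k Q E At i) =
      atIter k Q E At (i + 1) ∘ₗ δ +
        (-1 : Q) ^ i • (δ.lTensor (ExteriorAlgebra Q Ω[Q⁄k]) ∘ₗ atIter k Q E At (i + 1)) := by
  set W := wedgeExtension At
  set T := atIter k Q E At
  set L := (LinearMap.mulLeft Q (ExteriorAlgebra.ι Q a)).rTensor E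
  set R := (LinearMap.mulRight Q (ExteriorAlgebra.ι Q a)).rTensor E
  set δΛ := δ.lTensor (ExteriorAlgebra Q Ω[Q⁄k])
  have W_δΛ (t) : W (δΛ t) = R t - δΛ (W t) :=
    eq_sub_of_add_eq (LinearMap.congr_fun (wedgeExtension_supercommutator h) t)
  have W_L (t) : W (L t) = L (W t) :=
    LinearMap.congr_fun (wedgeExtension_comp_rTensor_mulLeft At _) t
  have R_T (j : ℕ) (e : E) : R (T j e) = (-1 : Q) ^ j • L (T j e) :=
    LinearMap.congr_fun (rTensor_mulRight_ι_comp_atIter At a j) e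
  have T_succ (j : ℕ) (e : E) : T (j + 1) e = W (T j e) := rfl
  refine LinearMap.ext fun e ↦ ?_
  simp only [LinearMap.add_apply, LinearMap.smul_apply, LinearMap.comp_apply]
  induction i with
  | zero =>
    have T_zero_δ : T 0 (δ e) = δΛ (T 0 e) := by simp [T, δΛ, atIter]
    simp [T_succ, T_zero_δ, W_δΛ, R_T]
  | succ i ih =>
    have sign : (-1 : Q) ^ i * (-1) ^ (i + 1) = -1 := by
      rw [pow_succ, ← mul_assoc, ← mul_pow]
      simp
    rw [← sub_eq_iff_eq_add, eq_comm]
    calc T (i + 2) (δ e)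
        = W ((i + 1 : Q) • L (T i e) - (-1 : Q) ^ i • δΛ (T (i + 1) e)) := by
          rw [T_succ, sub_eq_iff_eq_add.mpr ih]
      _ = (i + 1 : Q) • L (T (i + 1) e) -
            (-1 : Q) ^ i • ((-1 : Q) ^ (i + 1) • L (T (i + 1) e) - δΛ (T (i + 2) e)) := by
          rw [map_sub, map_smul, map_smul, W_L, W_δΛ, R_T, ← T_succ, ← T_succ]
      _ = ((i + 1 : ℕ) + 1 : Q) • L (T (i + 1) e) - (-1 : Q) ^ (i + 1) • δΛ (T (i + 2) e) := by
          rw [smul_sub, smul_smul, sign]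
          push_cast
          module

lemma lTensor_fst_comp_atIter_oddForm_succ (φ₀ : E₀ →ₗ[Q] Ω[Q⁄k] ⊗[Q] E₁)
    (φ₁ : E₁ →ₗ[Q] Ω[Q⁄k] ⊗[Q] E₀) (i : ℕ) :
    (LinearMap.fst Q E₀ E₁).lTensor _ ∘ₗ atIter k Q (E₀ × E₁) (oddForm φ₀ φ₁) (i + 1) =
      wedgeExtension φ₁ ∘ₗ
        (LinearMap.snd Q E₀ E₁).lTensor _ ∘ₗ atIter k Q (E₀ × E₁) (oddForm φ₀ φ₁) i := by
  rw [atIter_succ, ← LinearMap.comp_assoc, lTensor_comp_wedgeExtension, lTensor_fst_comp_oddForm,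
    ← wedgeExtension_comp_lTensor, LinearMap.comp_assoc]

lemma lTensor_snd_comp_atIter_oddForm_succ (φ₀ : E₀ →ₗ[Q] Ω[Q⁄k] ⊗[Q] E₁)
    (φ₁ : E₁ →ₗ[Q] Ω[Q⁄k] ⊗[Q] E₀) (i : ℕ) :
    (LinearMap.snd Q E₀ E₁).lTensor _ ∘ₗ atIter k Q (E₀ × E₁) (oddForm φ₀ φ₁) (i + 1) =
      wedgeExtension φ₀ ∘ₗ
        (LinearMap.fst Q E₀ E₁).lTensor _ ∘ₗ atIter k Q (E₀ × E₁) (oddForm φ₀ φ₁) i := by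
  rw [atIter_succ, ← LinearMap.comp_assoc, lTensor_comp_wedgeExtension, lTensor_snd_comp_oddForm,
    ← wedgeExtension_comp_lTensor, LinearMap.comp_assoc]

lemma lTensor_snd_comp_atIter_oddForm_comp_inl (φ₀ : E₀ →ₗ[Q] Ω[Q⁄k] ⊗[Q] E₁)
    (φ₁ : E₁ →ₗ[Q] Ω[Q⁄k] ⊗[Q] E₀) (n : ℕ) :
    ((LinearMap.snd Q E₀ E₁).lTensor _ ∘ₗ atIter k Q (E₀ × E₁) (oddForm φ₀ φ₁) (2 * n)) ∘ₗ
      LinearMap.inl Q E₀ E₁ = 0 := by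
  induction n with
  | zero => ext; simp [atIter]
  | succ n ih =>
    rw [mul_add_one, lTensor_snd_comp_atIter_oddForm_succ, lTensor_fst_comp_atIter_oddForm_succ,
      LinearMap.comp_assoc, LinearMap.comp_assoc, ih, LinearMap.comp_zero, LinearMap.comp_zero]

lemma lTensor_fst_comp_atIter_oddForm_comp_inr (φ₀ : E₀ →ₗ[Q] Ω[Q⁄k] ⊗[Q] E₁)
    (φ₁ : E₁ →ₗ[Q] Ω[Q⁄k] ⊗[Q] E₀) (n : ℕ) :
    ((LinearMap.fst Q E₀ E₁).lTensor _ ∘ₗ atIter k Q (E₀ × E₁) (oddForm φ₀ φ₁) (2 * n)) ∘ₗ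
      LinearMap.inr Q E₀ E₁ = 0 := by
  induction n with
  | zero => ext; simp [atIter]
  | succ n ih =>
    rw [mul_add_one, lTensor_fst_comp_atIter_oddForm_succ, lTensor_snd_comp_atIter_oddForm_succ,
      LinearMap.comp_assoc, LinearMap.comp_assoc, ih, LinearMap.comp_zero, LinearMap.comp_zero]

lemma strT_atIter_oddForm_odd {r₀ r₁ : ℕ} (p₀ : (Fin r₀ → Q) →ₗ[Q] E₀)
    (s₀ : E₀ →ₗ[Q] (Fin r₀ → Q)) (p₁ : (Fin r₁ → Q) →ₗ[Q] E₁) (s₁ : E₁ →ₗ[Q] (Fin r₁ → Q))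
    (φ₀ : E₀ →ₗ[Q] Ω[Q⁄k] ⊗[Q] E₁) (φ₁ : E₁ →ₗ[Q] Ω[Q⁄k] ⊗[Q] E₀) {i : ℕ} (hi : Odd i) :
    strT Q p₀ s₀ p₁ s₁ (atIter k Q (E₀ × E₁) (oddForm φ₀ φ₁) i) = 0 := by
  obtain ⟨n, rfl⟩ := hi
  apply strT_eq_zero_of_diagonal_eq_zero
  · rw [← LinearMap.comp_assoc, lTensor_fst_comp_atIter_oddForm_succ, LinearMap.comp_assoc,
      lTensor_snd_comp_atIter_oddForm_comp_inl, LinearMap.comp_zero]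
  · rw [← LinearMap.comp_assoc, lTensor_snd_comp_atIter_oddForm_succ, LinearMap.comp_assoc,
      lTensor_fst_comp_atIter_oddForm_comp_inr, LinearMap.comp_zero]

lemma succ_smul_ι_mul_strT_atIter_oddForm_even {r₀ r₁ : ℕ} (p₀ : (Fin r₀ → Q) →ₗ[Q] E₀)
    (s₀ : E₀ →ₗ[Q] (Fin r₀ → Q)) (hps₀ : ∀ e, p₀ (s₀ e) = e)
    (p₁ : (Fin r₁ → Q) →ₗ[Q] E₁) (s₁ : E₁ →ₗ[Q] (Fin r₁ → Q)) (hps₁ : ∀ e, p₁ (s₁ e) = e)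
    {φ₀ : E₀ →ₗ[Q] Ω[Q⁄k] ⊗[Q] E₁} {φ₁ : E₁ →ₗ[Q] Ω[Q⁄k] ⊗[Q] E₀}
    {A : E₁ →ₗ[Q] E₀} {B : E₀ →ₗ[Q] E₁} {a : Ω[Q⁄k]}
    (h : oddForm φ₀ φ₁ ∘ₗ oddEnd A B + (oddEnd A B).lTensor _ ∘ₗ oddForm φ₀ φ₁ =
      TensorProduct.mk Q Ω[Q⁄k] (E₀ × E₁) a) {i : ℕ} (hi : Even i) :
    (i + 1) • (ExteriorAlgebra.ι Q a *
      strT Q p₀ s₀ p₁ s₁ (atIter k Q (E₀ × E₁) (oddForm φ₀ φ₁) i)) = 0 := by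
  set T := atIter k Q (E₀ × E₁) (oddForm φ₀ φ₁)
  set l := LinearMap.mulLeft Q (ExteriorAlgebra.ι Q a)
  calc (i + 1) • (ExteriorAlgebra.ι Q a * strT Q p₀ s₀ p₁ s₁ (T i))
      = ((i + 1 : Q) • l) (strT Q p₀ s₀ p₁ s₁ (T i)) := by
        rw [← Nat.cast_smul_eq_nsmul Q]
        simp [l]
    _ = strT Q p₀ s₀ p₁ s₁ ((i + 1 : Q) • (l.rTensor (E₀ × E₁) ∘ₗ T i)) := by
        rw [← strT_rTensor_comp, LinearMap.rTensor_smul, LinearMap.smul_comp]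
    _ = strT Q p₀ s₀ p₁ s₁ (T (i + 1) ∘ₗ oddEnd A B + (oddEnd A B).lTensor _ ∘ₗ T (i + 1)) := by
        rw [succ_smul_mulLeft_ι_comp_atIter h, hi.neg_one_pow, one_smul]
    _ = 0 := strT_supercommutator_oddEnd p₀ s₀ hps₀ p₁ s₁ hps₁ A B (T (i + 1))

end Atiyah

theorem df_wedge_str_atiyah_power_vanishes_general
    (E₀ E₁ : Type u) [AddCommGroup E₀] [Module Q E₀] [AddCommGroup E₁] [Module Q E₁]
    {r₀ r₁ : ℕ}
    (p₀ : (Fin r₀ → Q) →ₗ[Q] E₀) (s₀ : E₀ →ₗ[Q] (Fin r₀ → Q)) (hps₀ : ∀ e, p₀ (s₀ e) = e)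
    (p₁ : (Fin r₁ → Q) →ₗ[Q] E₁) (s₁ : E₁ →ₗ[Q] (Fin r₁ → Q)) (hps₁ : ∀ e, p₁ (s₁ e) = e)
    (f : Q) (A : E₁ →ₗ[Q] E₀) (B : E₀ →ₗ[Q] E₁)
    (hAB : ∀ y : E₀, A (B y) = f • y) (hBA : ∀ x : E₁, B (A x) = f • x)
    (na0 : Conn k Q E₀) (na1 : Conn k Q E₁)
    (At₁ : E₁ →ₗ[Q] Ω[Q⁄k] ⊗[Q] E₀) (At₀ : E₀ →ₗ[Q] Ω[Q⁄k] ⊗[Q] E₁)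
    (hAt₁ : ∀ x, At₁ x = na0.toFun (A x) - (LinearMap.lTensor (Ω[Q⁄k]) A) (na1.toFun x))
    (hAt₀ : ∀ y, At₀ y = na1.toFun (B y) - (LinearMap.lTensor (Ω[Q⁄k]) B) (na0.toFun y))
    (At : (E₀ × E₁) →ₗ[Q] Ω[Q⁄k] ⊗[Q] (E₀ × E₁))
    (hAt : At = (LinearMap.lTensor (Ω[Q⁄k]) (LinearMap.inr Q E₀ E₁)) ∘ₗ At₀ ∘ₗ
          LinearMap.fst Q E₀ E₁
        + (LinearMap.lTensor (Ω[Q⁄k]) (LinearMap.inl Q E₀ E₁)) ∘ₗ At₁ ∘ₗ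
          LinearMap.snd Q E₀ E₁)
    (i : ℕ) :
    (i + 1) • (ExteriorAlgebra.ι Q (KaehlerDifferential.D k Q f) *
      strT Q p₀ s₀ p₁ s₁ (atIter k Q (E₀ × E₁) At i)) = 0 := by
  obtain rfl : At = oddForm At₀ At₁ := hAt
  rcases i.even_or_odd with i_even | i_odd
  · exact succ_smul_ι_mul_strT_atIter_oddForm_even p₀ s₀ hps₀ p₁ s₁ hps₁
      (oddForm_supercommutator_oddEnd (atiyah_comp_add_lTensor_comp_atiyah hAB hAt₁ hAt₀)
        (atiyah_comp_add_lTensor_comp_atiyah hBA hAt₀ hAt₁)) i_even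
  · rw [strT_atIter_oddForm_odd p₀ s₀ p₁ s₁ At₀ At₁ i_odd, mul_zero, smul_zero]

theorem df_wedge_str_atiyah_power_vanishes
    [Algebra ℚ k] [Algebra ℚ Q] [IsScalarTower ℚ k Q] [Algebra.Smooth k Q]
    (E₀ E₁ : Type u) [AddCommGroup E₀] [Module Q E₀] [AddCommGroup E₁] [Module Q E₁]
    [Module.Finite Q E₀] [Module.Projective Q E₀]
    [Module.Finite Q E₁] [Module.Projective Q E₁]
    {r₀ r₁ : ℕ}
    (p₀ : (Fin r₀ → Q) →ₗ[Q] E₀) (s₀ : E₀ →ₗ[Q] (Fin r₀ → Q)) (hps₀ : ∀ e, p₀ (s₀ e) = e)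
    (p₁ : (Fin r₁ → Q) →ₗ[Q] E₁) (s₁ : E₁ →ₗ[Q] (Fin r₁ → Q)) (hps₁ : ∀ e, p₁ (s₁ e) = e)
    (f : Q) (A : E₁ →ₗ[Q] E₀) (B : E₀ →ₗ[Q] E₁)
    (hAB : ∀ y : E₀, A (B y) = f • y) (hBA : ∀ x : E₁, B (A x) = f • x)
    (na0 : Conn k Q E₀) (na1 : Conn k Q E₁)
    (At₁ : E₁ →ₗ[Q] Ω[Q⁄k] ⊗[Q] E₀) (At₀ : E₀ →ₗ[Q] Ω[Q⁄k] ⊗[Q] E₁)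
    (hAt₁ : ∀ x, At₁ x = na0.toFun (A x) - (LinearMap.lTensor (Ω[Q⁄k]) A) (na1.toFun x))
    (hAt₀ : ∀ y, At₀ y = na1.toFun (B y) - (LinearMap.lTensor (Ω[Q⁄k]) B) (na0.toFun y))
    (At : (E₀ × E₁) →ₗ[Q] Ω[Q⁄k] ⊗[Q] (E₀ × E₁))
    (hAt : At = (LinearMap.lTensor (Ω[Q⁄k]) (LinearMap.inr Q E₀ E₁)) ∘ₗ At₀ ∘ₗ
          LinearMap.fst Q E₀ E₁
        + (LinearMap.lTensor (Ω[Q⁄k]) (LinearMap.inl Q E₀ E₁)) ∘ₗ At₁ ∘ₗ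
          LinearMap.snd Q E₀ E₁)
    (i : ℕ) :
    ExteriorAlgebra.ι Q (KaehlerDifferential.D k Q f) *
        strT Q p₀ s₀ p₁ s₁ (atIter k Q (E₀ × E₁) At i) = 0 := by
  have : IsAddTorsionFree (ExteriorAlgebra Q Ω[Q⁄k]) := .of_module_rat _
  exact (nsmul_eq_zero_iff.mp (df_wedge_str_atiyah_power_vanishes_general k Q E₀ E₁ p₀ s₀ hps₀
    p₁ s₁ hps₁ f A B hAB hBA na0 na1 At₁ At₀ hAt₁ hAt₀ At hAt i)).resolve_right i.succ_ne_zero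
end

section
/- Let E and E′ be matrix factorizations of f ∈ Q with chosen connections, and let β : E′ → E be a strict morphism. Then for every n ≥ 1 the strict morphisms φ̃ⁿ_E ∘ β and (1^{⊗n} ⊗ β) ∘ φ̃ⁿ_{E′} from E′ to (Q →^{df∧} Ω¹)^{⊗n} ⊗_mf E are homotopic, where φ̃ⁿ denotes the n-fold iterate of the strict morphism φ̃ = (id, At) (i.e. the composite φ̃^{(n)}∘⋯∘φ̃^{(1)} with φ̃^{(i)} = 1^{⊗(i−1)} ⊗ φ̃). -/
/-!
STATEMENT 12: For matrix factorizations E, E′ of f with chosen connections and a strict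
morphism β : E′ → E, the strict morphisms φ̃ⁿ_E ∘ β and (1^{⊗n} ⊗ β) ∘ φ̃ⁿ_{E′} from E′ to
(Q →^{df∧} Ω¹)^{⊗n} ⊗_mf E are homotopic for every n ≥ 1.

The n-th stage (Q →^{df∧} Ω¹)^{⊗n} ⊗_mf E is realized by the tower `Tw 0 = E`,
`Tw (i+1) = (Q ⊕ Ω¹) ⊗ Tw i`, with its matrix-factorization differential δ and parity
involution ε built recursively from those of the folded two-term complex (Q → Ω¹)
(namely d(q,ω) = (0, q·df), ε(q,ω) = (q,−ω)) and those of E.  A homotopy between two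
strict morphisms is an odd Q-linear map h with δ∘h + h∘d = (difference).
-/

open TensorProduct

universe u
variable (k Q : Type u) [CommRing k] [CommRing Q] [Algebra k Q]

/-- The differential of the folded two-term complex `(Q →^{df∧} Ω¹)`. -/
noncomputable def dTwo (f : Q) : (Q × Ω[Q⁄k]) →ₗ[Q] (Q × Ω[Q⁄k]) :=
  LinearMap.prod 0
    ((LinearMap.toSpanSingleton Q (Ω[Q⁄k]) (KaehlerDifferential.D k Q f)) ∘ₗ
      LinearMap.fst Q Q (Ω[Q⁄k]))

/-- The parity involution of the folded two-term complex. -/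
noncomputable def eTwo : (Q × Ω[Q⁄k]) →ₗ[Q] (Q × Ω[Q⁄k]) :=
  LinearMap.prodMap LinearMap.id (-LinearMap.id)

/-- The matrix-factorization differential of the tower. -/
noncomputable def deltaTw (E : Type u) [AddCommGroup E] [Module Q E] (f : Q)
    (dE : E →ₗ[Q] E) (eE : E →ₗ[Q] E) :
    ∀ i, (Tw k Q E i) →ₗ[Q] (Tw k Q E i)
  | 0 => dE
  | (i+1) => TensorProduct.map (dTwo k Q f) LinearMap.id
      + TensorProduct.map (eTwo k Q) (deltaTw E f dE eE i)

/-- The parity involution of the tower. -/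
noncomputable def epsTw (E : Type u) [AddCommGroup E] [Module Q E] (eE : E →ₗ[Q] E) :
    ∀ i, (Tw k Q E i) →ₗ[Q] (Tw k Q E i)
  | 0 => eE
  | (i+1) => TensorProduct.map (eTwo k Q) (epsTw E eE i)

/-- `1^{⊗ n} ⊗ β`. -/
noncomputable def extMap (E F : Type u) [AddCommGroup E] [Module Q E]
    [AddCommGroup F] [Module Q F] (β : F →ₗ[Q] E) :
    ∀ i, (Tw k Q F i) →ₗ[Q] (Tw k Q E i)
  | 0 => β
  | (i+1) => LinearMap.lTensor (Q × Ω[Q⁄k]) (extMap E F β i)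

/-!
Write `[∇, a] = ∇ ∘ a - (1 ⊗ a) ∘ ∇` for a `Q`-linear map `a`.  This is again `Q`-linear, and it
is a derivation: `[∇, a ∘ b] = [∇, a] ∘ b + (1 ⊗ a) ∘ [∇, b]`.  The Atiyah class of `(E, d)` is
`[∇, d]`, so applying `[∇, -]` to `d² = f` gives `At ∘ d + (1 ⊗ d) ∘ At = df ⊗ -`, which is the
strictness of `φ̃ = (id, At)`, and applying it to `d ∘ β = β ∘ d` shows that `[∇, β]`, viewed in the
summand `Ω¹ ⊗ E`, is a homotopy from `(1 ⊗ β) ∘ φ̃` to `φ̃ ∘ β`.  Homotopies survive tensoring with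
`(Q → Ω¹)` and composition with strict morphisms, so the passage to `φ̃ⁿ` is an induction on `n`.
-/

section StrictHom

variable {R M N P : Type*} [Ring R] [AddCommGroup M] [Module R M] [AddCommGroup N] [Module R N]
  [AddCommGroup P] [Module R P]

/-- Strict morphisms between `ℤ/2`-graded modules with an odd endomorphism.  Each module is
encoded by its endomorphism `d` and its parity involution `ε` (`1` in even, `-1` in odd degree), so
that commuting with `ε` means being of even degree. -/
structure IsStrictHom (dM εM : M →ₗ[R] M) (dN εN : N →ₗ[R] N) (φ : M →ₗ[R] N) : Prop where
  differential_comp : dN ∘ₗ φ = φ ∘ₗ dM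
  parity_comp : εN ∘ₗ φ = φ ∘ₗ εM

/-- Two maps are homotopic if their difference is the boundary of an odd map, in the same encoding
as `IsStrictHom`; being odd means anticommuting with the parity involutions. -/
def OddHomotopic (dM εM : M →ₗ[R] M) (dN εN : N →ₗ[R] N) (φ ψ : M →ₗ[R] N) : Prop :=
  ∃ h : M →ₗ[R] N, h ∘ₗ εM = -(εN ∘ₗ h) ∧ dN ∘ₗ h + h ∘ₗ dM = φ - ψ

variable {dM εM : M →ₗ[R] M} {dN εN : N →ₗ[R] N} {dP εP : P →ₗ[R] P}

theorem IsStrictHom.id : IsStrictHom dM εM dM εM LinearMap.id :=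
  ⟨rfl, rfl⟩

theorem IsStrictHom.comp {ψ : N →ₗ[R] P} {φ : M →ₗ[R] N} (hψ : IsStrictHom dN εN dP εP ψ)
    (hφ : IsStrictHom dM εM dN εN φ) : IsStrictHom dM εM dP εP (ψ ∘ₗ φ) where
  differential_comp := by
    rw [← LinearMap.comp_assoc, hψ.differential_comp, LinearMap.comp_assoc,
      hφ.differential_comp, LinearMap.comp_assoc]
  parity_comp := by
    rw [← LinearMap.comp_assoc, hψ.parity_comp, LinearMap.comp_assoc, hφ.parity_comp,
      LinearMap.comp_assoc]

namespace OddHomotopic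

theorem refl (φ : M →ₗ[R] N) : OddHomotopic dM εM dN εN φ φ :=
  ⟨0, by simp, by simp⟩

theorem trans {φ ψ χ : M →ₗ[R] N} (h₁ : OddHomotopic dM εM dN εN φ ψ)
    (h₂ : OddHomotopic dM εM dN εN ψ χ) : OddHomotopic dM εM dN εN φ χ := by
  obtain ⟨h, h_odd, h_boundary⟩ := h₁
  obtain ⟨g, g_odd, g_boundary⟩ := h₂
  refine ⟨h + g, ?_, ?_⟩
  · rw [LinearMap.add_comp, h_odd, g_odd, LinearMap.comp_add, neg_add]
  · rw [LinearMap.comp_add, LinearMap.add_comp, add_add_add_comm, h_boundary, g_boundary,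
      sub_add_sub_cancel]

theorem comp_left {φ ψ : M →ₗ[R] N} (hφψ : OddHomotopic dM εM dN εN φ ψ) {χ : N →ₗ[R] P}
    (hχ : IsStrictHom dN εN dP εP χ) : OddHomotopic dM εM dP εP (χ ∘ₗ φ) (χ ∘ₗ ψ) := by
  obtain ⟨h, h_odd, h_boundary⟩ := hφψ
  refine ⟨χ ∘ₗ h, ?_, ?_⟩
  · rw [LinearMap.comp_assoc, h_odd, LinearMap.comp_neg, ← LinearMap.comp_assoc,
      ← hχ.parity_comp, LinearMap.comp_assoc]
  · rw [← LinearMap.comp_assoc, hχ.differential_comp, LinearMap.comp_assoc,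
      LinearMap.comp_assoc, ← LinearMap.comp_add, h_boundary, LinearMap.comp_sub]

theorem comp_right {φ ψ : N →ₗ[R] P} (hφψ : OddHomotopic dN εN dP εP φ ψ) {χ : M →ₗ[R] N}
    (hχ : IsStrictHom dM εM dN εN χ) : OddHomotopic dM εM dP εP (φ ∘ₗ χ) (ψ ∘ₗ χ) := by
  obtain ⟨h, h_odd, h_boundary⟩ := hφψ
  refine ⟨h ∘ₗ χ, ?_, ?_⟩
  · rw [LinearMap.comp_assoc, ← hχ.parity_comp, ← LinearMap.comp_assoc, h_odd,
      LinearMap.neg_comp, LinearMap.comp_assoc]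
  · rw [LinearMap.comp_assoc, ← hχ.differential_comp, ← LinearMap.comp_assoc,
      ← LinearMap.comp_assoc, ← LinearMap.add_comp, h_boundary, LinearMap.sub_comp]

end OddHomotopic

end StrictHom

section TensorDifferential

variable {R T M N : Type*} [CommRing R] [AddCommGroup T] [Module R T] [AddCommGroup M]
  [Module R M] [AddCommGroup N] [Module R N]

/-- The differential `dT ⊗ 1 + εT ⊗ d` of a tensor product of `ℤ/2`-graded modules; the parity
involution `εT` of the first factor supplies the Koszul sign. -/
noncomputable def tensorDifferential (dT εT : T →ₗ[R] T) (d : M →ₗ[R] M) :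
    T ⊗[R] M →ₗ[R] T ⊗[R] M :=
  LinearMap.rTensor M dT + TensorProduct.map εT d

theorem tensorProduct_map_neg_left {T' : Type*} [AddCommGroup T'] [Module R T'] (a : T →ₗ[R] T')
    (b : M →ₗ[R] N) : TensorProduct.map (-a) b = -TensorProduct.map a b :=
  TensorProduct.ext' fun x y => TensorProduct.neg_tmul (a x) (b y)

theorem tensorProduct_map_neg_right {T' : Type*} [AddCommGroup T'] [Module R T'] (a : T →ₗ[R] T')
    (b : M →ₗ[R] N) : TensorProduct.map a (-b) = -TensorProduct.map a b :=
  TensorProduct.ext' fun x y => TensorProduct.tmul_neg (a x) (b y)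

variable {dT εT : T →ₗ[R] T} {dM εM : M →ₗ[R] M} {dN εN : N →ₗ[R] N}

theorem IsStrictHom.lTensor {φ : M →ₗ[R] N} (hφ : IsStrictHom dM εM dN εN φ) :
    IsStrictHom (tensorDifferential dT εT dM) (TensorProduct.map εT εM)
      (tensorDifferential dT εT dN) (TensorProduct.map εT εN) (LinearMap.lTensor T φ) where
  differential_comp := by
    simp only [tensorDifferential, LinearMap.add_comp, LinearMap.comp_add,
      LinearMap.rTensor_comp_lTensor, LinearMap.lTensor_comp_rTensor,
      LinearMap.map_comp_lTensor, LinearMap.lTensor_comp_map, hφ.differential_comp]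
  parity_comp := by
    rw [LinearMap.map_comp_lTensor, LinearMap.lTensor_comp_map, hφ.parity_comp]

theorem OddHomotopic.lTensor (hεT : εT ∘ₗ εT = LinearMap.id) (hdT : dT ∘ₗ εT = -(εT ∘ₗ dT))
    {φ ψ : M →ₗ[R] N} (hφψ : OddHomotopic dM εM dN εN φ ψ) :
    OddHomotopic (tensorDifferential dT εT dM) (TensorProduct.map εT εM)
      (tensorDifferential dT εT dN) (TensorProduct.map εT εN)
      (LinearMap.lTensor T φ) (LinearMap.lTensor T ψ) := by
  obtain ⟨h, h_odd, h_boundary⟩ := hφψ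
  refine ⟨TensorProduct.map εT h, ?_, ?_⟩
  · rw [← TensorProduct.map_comp, ← TensorProduct.map_comp, h_odd, tensorProduct_map_neg_right]
  · have cross_terms_cancel :
        TensorProduct.map (dT ∘ₗ εT) h + TensorProduct.map (εT ∘ₗ dT) h = 0 := by
      rw [← TensorProduct.map_add_left, hdT, neg_add_cancel, TensorProduct.map_zero_left]
    calc tensorDifferential dT εT dN ∘ₗ TensorProduct.map εT h
          + TensorProduct.map εT h ∘ₗ tensorDifferential dT εT dM
        = (TensorProduct.map (dT ∘ₗ εT) h + TensorProduct.map (εT ∘ₗ dT) h)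
          + (LinearMap.lTensor T (dN ∘ₗ h) + LinearMap.lTensor T (h ∘ₗ dM)) := by
          simp only [tensorDifferential, LinearMap.add_comp, LinearMap.comp_add,
            LinearMap.rTensor_comp_map, LinearMap.map_comp_rTensor, ← TensorProduct.map_comp,
            hεT, LinearMap.lTensor]
          abel
      _ = LinearMap.lTensor T φ - LinearMap.lTensor T ψ := by
          rw [cross_terms_cancel, zero_add, ← LinearMap.lTensor_add, h_boundary,
            LinearMap.lTensor_sub]

end TensorDifferential

namespace Conn

variable {k Q} {E F G : Type u} [AddCommGroup E] [Module Q E] [AddCommGroup F] [Module Q F]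
  [AddCommGroup G] [Module Q G]

theorem map_neg (nE : Conn k Q E) (x : E) : nE.toFun (-x) = -nE.toFun x :=
  (AddMonoidHom.mk' nE.toFun nE.map_add).map_neg x

/-- The commutator `[∇, a] = ∇ ∘ a - (1 ⊗ a) ∘ ∇` of a `Q`-linear map with the connections on its
target (first argument) and source (second argument).  It is `Q`-linear although the connections
are not. -/
noncomputable def commutator (nE : Conn k Q E) (nF : Conn k Q F) (a : F →ₗ[Q] E) :
    F →ₗ[Q] Ω[Q⁄k] ⊗[Q] E where
  toFun x := nE.toFun (a x) - LinearMap.lTensor (Ω[Q⁄k]) a (nF.toFun x)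
  map_add' x y := by
    simp only [_root_.map_add, nE.map_add, nF.map_add]
    abel
  map_smul' q x := by
    simp only [map_smul, nE.leibniz, nF.leibniz, _root_.map_add, LinearMap.lTensor_tmul,
      RingHom.id_apply, smul_sub]
    abel

theorem commutator_apply (nE : Conn k Q E) (nF : Conn k Q F) (a : F →ₗ[Q] E) (x : F) :
    commutator nE nF a x = nE.toFun (a x) - LinearMap.lTensor (Ω[Q⁄k]) a (nF.toFun x) :=
  rfl

theorem commutator_neg (nE : Conn k Q E) (nF : Conn k Q F) (a : F →ₗ[Q] E) :
    commutator nE nF (-a) = -commutator nE nF a := by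
  ext x
  simp only [commutator_apply, LinearMap.neg_apply, map_neg, LinearMap.lTensor_neg]
  abel

theorem commutator_comp (nE : Conn k Q E) (nF : Conn k Q F) (nG : Conn k Q G)
    (a : F →ₗ[Q] E) (b : G →ₗ[Q] F) :
    commutator nE nG (a ∘ₗ b)
      = commutator nE nF a ∘ₗ b + LinearMap.lTensor (Ω[Q⁄k]) a ∘ₗ commutator nF nG b := by
  ext x
  simp only [commutator_apply, LinearMap.comp_apply, LinearMap.add_apply, map_sub,
    LinearMap.lTensor_comp_apply]
  abel

theorem commutator_smul_id (nE : Conn k Q E) (q : Q) :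
    commutator nE nE (q • LinearMap.id)
      = TensorProduct.mk Q (Ω[Q⁄k]) E (KaehlerDifferential.D k Q q) := by
  ext x
  simp [commutator_apply, nE.leibniz, LinearMap.lTensor_smul]

theorem commutator_comp_of_comm {nE : Conn k Q E} {nF : Conn k Q F} {εE : E →ₗ[Q] E}
    {εF : F →ₗ[Q] F} (hεE : commutator nE nE εE = 0) (hεF : commutator nF nF εF = 0)
    {a : F →ₗ[Q] E} (ha : εE ∘ₗ a = a ∘ₗ εF) :
    commutator nE nF a ∘ₗ εF = LinearMap.lTensor (Ω[Q⁄k]) εE ∘ₗ commutator nE nF a := by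
  have h := congrArg (commutator nE nF) ha
  rw [commutator_comp nE nE nF, commutator_comp nE nF nF, hεE, hεF] at h
  simpa using h.symm

/-- The Atiyah class `[∇, d]`.  For a matrix factorization, `∇` and `d` are the connection and the
differential on the sum of the two components. -/
noncomputable def atiyahClass (nE : Conn k Q E) (d : E →ₗ[Q] E) : E →ₗ[Q] Ω[Q⁄k] ⊗[Q] E :=
  commutator nE nE d

theorem atiyahClass_comp_add_lTensor_comp (nE : Conn k Q E) {d : E →ₗ[Q] E} {f : Q}
    (hd : d ∘ₗ d = f • LinearMap.id) :
    atiyahClass nE d ∘ₗ d + LinearMap.lTensor (Ω[Q⁄k]) d ∘ₗ atiyahClass nE d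
      = TensorProduct.mk Q (Ω[Q⁄k]) E (KaehlerDifferential.D k Q f) := by
  rw [atiyahClass, ← commutator_comp, hd, commutator_smul_id]

theorem atiyahClass_comp_of_anticomm {nE : Conn k Q E} {d ε : E →ₗ[Q] E}
    (hε : commutator nE nE ε = 0) (hd : d ∘ₗ ε = -(ε ∘ₗ d)) :
    atiyahClass nE d ∘ₗ ε = -(LinearMap.lTensor (Ω[Q⁄k]) ε ∘ₗ atiyahClass nE d) := by
  have h := congrArg (commutator nE nE) hd
  rw [commutator_neg, commutator_comp nE nE nE, commutator_comp nE nE nE, hε] at h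
  simpa [atiyahClass] using h

theorem atiyahClass_comp_sub_lTensor_comp (nE : Conn k Q E) (nF : Conn k Q F)
    {dE : E →ₗ[Q] E} {dF : F →ₗ[Q] F} {β : F →ₗ[Q] E} (hβ : dE ∘ₗ β = β ∘ₗ dF) :
    atiyahClass nE dE ∘ₗ β - LinearMap.lTensor (Ω[Q⁄k]) β ∘ₗ atiyahClass nF dF
      = commutator nE nF β ∘ₗ dF - LinearMap.lTensor (Ω[Q⁄k]) dE ∘ₗ commutator nE nF β := by
  have h := congrArg (commutator nE nF) hβ
  rw [commutator_comp nE nE nF, commutator_comp nE nF nF] at h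
  exact sub_eq_sub_iff_add_eq_add.mpr h

end Conn

section PhiTilde

variable {k Q} {E F : Type u} [AddCommGroup E] [Module Q E] [AddCommGroup F] [Module Q F]

theorem eTwo_comp_eTwo : eTwo k Q ∘ₗ eTwo k Q = LinearMap.id := by
  ext <;> simp [eTwo]

theorem dTwo_comp_eTwo (f : Q) : dTwo k Q f ∘ₗ eTwo k Q = -(eTwo k Q ∘ₗ dTwo k Q f) := by
  ext <;> simp [dTwo, eTwo]

/-- The inclusion of `Ω¹ ⊗ E` as a direct summand of `(Q ⊕ Ω¹) ⊗ E`. -/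
noncomputable def formInclusion (k Q E : Type u) [CommRing k] [CommRing Q] [Algebra k Q]
    [AddCommGroup E] [Module Q E] : Ω[Q⁄k] ⊗[Q] E →ₗ[Q] (Q × Ω[Q⁄k]) ⊗[Q] E :=
  LinearMap.rTensor E (LinearMap.inr Q Q (Ω[Q⁄k]))

theorem lTensor_comp_formInclusion (β : F →ₗ[Q] E) :
    LinearMap.lTensor (Q × Ω[Q⁄k]) β ∘ₗ formInclusion k Q F
      = formInclusion k Q E ∘ₗ LinearMap.lTensor (Ω[Q⁄k]) β := by
  rw [formInclusion, formInclusion, LinearMap.lTensor_comp_rTensor,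
    LinearMap.rTensor_comp_lTensor]

theorem map_eTwo_comp_formInclusion (g : E →ₗ[Q] E) :
    TensorProduct.map (eTwo k Q) g ∘ₗ formInclusion k Q E
      = -(formInclusion k Q E ∘ₗ LinearMap.lTensor (Ω[Q⁄k]) g) := by
  have eTwo_comp_inr : eTwo k Q ∘ₗ LinearMap.inr Q Q (Ω[Q⁄k]) = -LinearMap.inr Q Q (Ω[Q⁄k]) := by
    ext <;> simp [eTwo]
  rw [formInclusion, LinearMap.map_comp_rTensor, eTwo_comp_inr, tensorProduct_map_neg_left,
    LinearMap.rTensor_comp_lTensor]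

theorem tensorDifferential_comp_formInclusion (f : Q) (d : E →ₗ[Q] E) :
    tensorDifferential (dTwo k Q f) (eTwo k Q) d ∘ₗ formInclusion k Q E
      = -(formInclusion k Q E ∘ₗ LinearMap.lTensor (Ω[Q⁄k]) d) := by
  have dTwo_comp_inr : dTwo k Q f ∘ₗ LinearMap.inr Q Q (Ω[Q⁄k]) = 0 := by
    ext <;> simp [dTwo]
  rw [tensorDifferential, LinearMap.add_comp, map_eTwo_comp_formInclusion, formInclusion,
    ← LinearMap.rTensor_comp, dTwo_comp_inr, LinearMap.rTensor_zero, zero_add]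

/-- The map `φ̃ = (id, At) : E → (Q ⊕ Ω¹) ⊗ E`, which is `Phi k Q E At 0` by definition. -/
noncomputable def phiTilde (At : E →ₗ[Q] Ω[Q⁄k] ⊗[Q] E) : E →ₗ[Q] (Q × Ω[Q⁄k]) ⊗[Q] E :=
  TensorProduct.mk Q (Q × Ω[Q⁄k]) E (1, 0) + formInclusion k Q E ∘ₗ At

theorem tensorDifferential_one_tmul (f : Q) (d : E →ₗ[Q] E) (x : E) :
    tensorDifferential (dTwo k Q f) (eTwo k Q) d ((1, 0) ⊗ₜ x)
      = formInclusion k Q E (KaehlerDifferential.D k Q f ⊗ₜ x) + (1, 0) ⊗ₜ d x := by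
  simp [tensorDifferential, dTwo, eTwo, formInclusion]

theorem isStrictHom_phiTilde {f : Q} {d ε : E →ₗ[Q] E} {At : E →ₗ[Q] Ω[Q⁄k] ⊗[Q] E}
    (hd : At ∘ₗ d + LinearMap.lTensor (Ω[Q⁄k]) d ∘ₗ At
      = TensorProduct.mk Q (Ω[Q⁄k]) E (KaehlerDifferential.D k Q f))
    (hε : At ∘ₗ ε = -(LinearMap.lTensor (Ω[Q⁄k]) ε ∘ₗ At)) :
    IsStrictHom d ε (tensorDifferential (dTwo k Q f) (eTwo k Q) d)
      (TensorProduct.map (eTwo k Q) ε) (phiTilde At) where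
  differential_comp := by
    ext x
    have hdx := LinearMap.congr_fun hd x
    have hincl := LinearMap.congr_fun (tensorDifferential_comp_formInclusion f d) (At x)
    simp only [LinearMap.add_apply, LinearMap.comp_apply, LinearMap.neg_apply,
      TensorProduct.mk_apply] at hdx hincl
    simp only [phiTilde, LinearMap.comp_apply, LinearMap.add_apply, TensorProduct.mk_apply,
      map_add, tensorDifferential_one_tmul, hincl, ← hdx]
    abel
  parity_comp := by
    ext x
    have hεx := LinearMap.congr_fun hε x
    have hincl := LinearMap.congr_fun (map_eTwo_comp_formInclusion (k := k) ε) (At x)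
    simp only [LinearMap.comp_apply, LinearMap.neg_apply] at hεx hincl
    have eTwo_one : eTwo k Q (1, 0) = (1, 0) := by simp [eTwo]
    simp [phiTilde, hincl, hεx, eTwo_one]

theorem oddHomotopic_phiTilde {f : Q} {dE εE : E →ₗ[Q] E} {dF εF : F →ₗ[Q] F}
    {AtE : E →ₗ[Q] Ω[Q⁄k] ⊗[Q] E} {AtF : F →ₗ[Q] Ω[Q⁄k] ⊗[Q] F} {β : F →ₗ[Q] E}
    {σ : F →ₗ[Q] Ω[Q⁄k] ⊗[Q] E}
    (hσ : AtE ∘ₗ β - LinearMap.lTensor (Ω[Q⁄k]) β ∘ₗ AtF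
      = σ ∘ₗ dF - LinearMap.lTensor (Ω[Q⁄k]) dE ∘ₗ σ)
    (hσε : σ ∘ₗ εF = LinearMap.lTensor (Ω[Q⁄k]) εE ∘ₗ σ) :
    OddHomotopic dF εF (tensorDifferential (dTwo k Q f) (eTwo k Q) dE)
      (TensorProduct.map (eTwo k Q) εE)
      (phiTilde AtE ∘ₗ β) (LinearMap.lTensor (Q × Ω[Q⁄k]) β ∘ₗ phiTilde AtF) := by
  refine ⟨formInclusion k Q E ∘ₗ σ, ?_, ?_⟩
  · rw [← LinearMap.comp_assoc _ _ (TensorProduct.map _ _), map_eTwo_comp_formInclusion,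
      LinearMap.neg_comp, LinearMap.comp_assoc, hσε]
    abel
  · calc tensorDifferential (dTwo k Q f) (eTwo k Q) dE ∘ₗ formInclusion k Q E ∘ₗ σ
          + (formInclusion k Q E ∘ₗ σ) ∘ₗ dF
        = formInclusion k Q E ∘ₗ (σ ∘ₗ dF - LinearMap.lTensor (Ω[Q⁄k]) dE ∘ₗ σ) := by
          rw [← LinearMap.comp_assoc, tensorDifferential_comp_formInclusion, LinearMap.comp_sub,
            LinearMap.neg_comp, LinearMap.comp_assoc, LinearMap.comp_assoc]
          abel
      _ = formInclusion k Q E ∘ₗ (AtE ∘ₗ β - LinearMap.lTensor (Ω[Q⁄k]) β ∘ₗ AtF) := by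
          rw [hσ]
      _ = phiTilde AtE ∘ₗ β - LinearMap.lTensor (Q × Ω[Q⁄k]) β ∘ₗ phiTilde AtF := by
          rw [LinearMap.comp_sub, ← LinearMap.comp_assoc _ _ (formInclusion k Q E),
            ← LinearMap.comp_assoc _ _ (formInclusion k Q E), ← lTensor_comp_formInclusion]
          ext x
          simp [phiTilde]

end PhiTilde

section Tower

variable {k Q} {E F : Type u} [AddCommGroup E] [Module Q E] [AddCommGroup F] [Module Q F]
  {f : Q} {dE εE : E →ₗ[Q] E} {dF εF : F →ₗ[Q] F} {β : F →ₗ[Q] E}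
  {AtE : E →ₗ[Q] Ω[Q⁄k] ⊗[Q] E} {AtF : F →ₗ[Q] Ω[Q⁄k] ⊗[Q] F}

theorem isStrictHom_Phi
    (hφ : IsStrictHom dE εE (tensorDifferential (dTwo k Q f) (eTwo k Q) dE)
      (TensorProduct.map (eTwo k Q) εE) (phiTilde AtE)) (n : ℕ) :
    IsStrictHom (deltaTw k Q E f dE εE n) (epsTw k Q E εE n)
      (deltaTw k Q E f dE εE (n + 1)) (epsTw k Q E εE (n + 1)) (Phi k Q E AtE n) := by
  induction n with
  | zero => exact hφ
  | succ n ih => exact ih.lTensor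

theorem isStrictHom_psiTw
    (hφ : IsStrictHom dE εE (tensorDifferential (dTwo k Q f) (eTwo k Q) dE)
      (TensorProduct.map (eTwo k Q) εE) (phiTilde AtE)) (n : ℕ) :
    IsStrictHom dE εE (deltaTw k Q E f dE εE n) (epsTw k Q E εE n) (psiTw k Q E AtE n) := by
  induction n with
  | zero => exact .id
  | succ n ih => exact (isStrictHom_Phi hφ n).comp ih

theorem oddHomotopic_Phi
    (hβ : OddHomotopic dF εF (tensorDifferential (dTwo k Q f) (eTwo k Q) dE)
      (TensorProduct.map (eTwo k Q) εE)
      (phiTilde AtE ∘ₗ β) (LinearMap.lTensor (Q × Ω[Q⁄k]) β ∘ₗ phiTilde AtF)) (n : ℕ) :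
    OddHomotopic (deltaTw k Q F f dF εF n) (epsTw k Q F εF n)
      (deltaTw k Q E f dE εE (n + 1)) (epsTw k Q E εE (n + 1))
      (Phi k Q E AtE n ∘ₗ extMap k Q E F β n)
      (extMap k Q E F β (n + 1) ∘ₗ Phi k Q F AtF n) := by
  induction n with
  | zero => exact hβ
  | succ n ih =>
    have h := ih.lTensor (eTwo_comp_eTwo (k := k)) (dTwo_comp_eTwo f)
    rwa [LinearMap.lTensor_comp, LinearMap.lTensor_comp] at h

theorem oddHomotopic_psiTw
    (hφE : IsStrictHom dE εE (tensorDifferential (dTwo k Q f) (eTwo k Q) dE)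
      (TensorProduct.map (eTwo k Q) εE) (phiTilde AtE))
    (hφF : IsStrictHom dF εF (tensorDifferential (dTwo k Q f) (eTwo k Q) dF)
      (TensorProduct.map (eTwo k Q) εF) (phiTilde AtF))
    (hβ : OddHomotopic dF εF (tensorDifferential (dTwo k Q f) (eTwo k Q) dE)
      (TensorProduct.map (eTwo k Q) εE)
      (phiTilde AtE ∘ₗ β) (LinearMap.lTensor (Q × Ω[Q⁄k]) β ∘ₗ phiTilde AtF)) (n : ℕ) :
    OddHomotopic dF εF (deltaTw k Q E f dE εE n) (epsTw k Q E εE n)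
      (psiTw k Q E AtE n ∘ₗ β) (extMap k Q E F β n ∘ₗ psiTw k Q F AtF n) := by
  induction n with
  | zero => exact .refl β
  | succ n ih =>
    have left := ih.comp_left (isStrictHom_Phi hφE n)
    have right := (oddHomotopic_Phi hβ n).comp_right (isStrictHom_psiTw hφF n)
    exact left.trans right

end Tower

section MatrixFactorization

variable {k Q} {E₀ E₁ F₀ F₁ : Type u}
  [AddCommGroup E₀] [Module Q E₀] [AddCommGroup E₁] [Module Q E₁]
  [AddCommGroup F₀] [Module Q F₀] [AddCommGroup F₁] [Module Q F₁]

/-- The differential on `E₀ ⊕ E₁` of a matrix factorization with components `A` and `B`. -/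
def totalDifferential (A : E₁ →ₗ[Q] E₀) (B : E₀ →ₗ[Q] E₁) : E₀ × E₁ →ₗ[Q] E₀ × E₁ :=
  LinearMap.prod (A ∘ₗ LinearMap.snd Q E₀ E₁) (B ∘ₗ LinearMap.fst Q E₀ E₁)

/-- The parity involution of the `ℤ/2`-graded module with even part `E₀` and odd part `E₁`. -/
def parityInvolution (Q E₀ E₁ : Type*) [Ring Q] [AddCommGroup E₀] [Module Q E₀]
    [AddCommGroup E₁] [Module Q E₁] : E₀ × E₁ →ₗ[Q] E₀ × E₁ :=
  LinearMap.prodMap LinearMap.id (-LinearMap.id)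

theorem totalDifferential_comp_self {f : Q} {A : E₁ →ₗ[Q] E₀} {B : E₀ →ₗ[Q] E₁}
    (hAB : ∀ y, A (B y) = f • y) (hBA : ∀ x, B (A x) = f • x) :
    totalDifferential A B ∘ₗ totalDifferential A B = f • LinearMap.id := by
  ext <;> simp [totalDifferential, hAB, hBA]

theorem totalDifferential_comp_parityInvolution (A : E₁ →ₗ[Q] E₀) (B : E₀ →ₗ[Q] E₁) :
    totalDifferential A B ∘ₗ parityInvolution Q E₀ E₁
      = -(parityInvolution Q E₀ E₁ ∘ₗ totalDifferential A B) := by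
  ext <;> simp [totalDifferential, parityInvolution]

theorem isStrictHom_prodMap {A : E₁ →ₗ[Q] E₀} {B : E₀ →ₗ[Q] E₁} {C : F₁ →ₗ[Q] F₀}
    {D : F₀ →ₗ[Q] F₁} {β₀ : F₀ →ₗ[Q] E₀} {β₁ : F₁ →ₗ[Q] E₁}
    (hA : A ∘ₗ β₁ = β₀ ∘ₗ C) (hB : B ∘ₗ β₀ = β₁ ∘ₗ D) :
    IsStrictHom (totalDifferential C D) (parityInvolution Q F₀ F₁)
      (totalDifferential A B) (parityInvolution Q E₀ E₁) (LinearMap.prodMap β₀ β₁) where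
  differential_comp := by
    refine LinearMap.ext fun x => Prod.ext ?_ ?_
    · exact LinearMap.congr_fun hA x.2
    · exact LinearMap.congr_fun hB x.1
  parity_comp := by
    ext <;> simp [parityInvolution]

namespace Conn

/-- The direct sum of two connections. -/
noncomputable def prod (n₀ : Conn k Q E₀) (n₁ : Conn k Q E₁) : Conn k Q (E₀ × E₁) where
  toFun x := LinearMap.lTensor (Ω[Q⁄k]) (LinearMap.inl Q E₀ E₁) (n₀.toFun x.1)
    + LinearMap.lTensor (Ω[Q⁄k]) (LinearMap.inr Q E₀ E₁) (n₁.toFun x.2)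
  map_add x y := by
    simp only [Prod.fst_add, Prod.snd_add, n₀.map_add, n₁.map_add, _root_.map_add]
    abel
  leibniz q x := by
    have tmul_eq (ω : Ω[Q⁄k]) : ω ⊗ₜ[Q] x = ω ⊗ₜ (x.1, 0) + ω ⊗ₜ (0, x.2) := by
      rw [← TensorProduct.tmul_add, Prod.mk_add_mk, add_zero, zero_add]
    simp only [Prod.smul_fst, Prod.smul_snd, n₀.leibniz, n₁.leibniz, _root_.map_add, map_smul,
      LinearMap.lTensor_tmul, LinearMap.inl_apply, LinearMap.inr_apply, smul_add, tmul_eq]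
    abel

theorem prod_apply (n₀ : Conn k Q E₀) (n₁ : Conn k Q E₁) (x : E₀ × E₁) :
    (n₀.prod n₁).toFun x = LinearMap.lTensor (Ω[Q⁄k]) (LinearMap.inl Q E₀ E₁) (n₀.toFun x.1)
      + LinearMap.lTensor (Ω[Q⁄k]) (LinearMap.inr Q E₀ E₁) (n₁.toFun x.2) :=
  rfl

theorem commutator_prod_parityInvolution (n₀ : Conn k Q E₀) (n₁ : Conn k Q E₁) :
    commutator (n₀.prod n₁) (n₀.prod n₁) (parityInvolution Q E₀ E₁) = 0 := by
  have parity_inl : parityInvolution Q E₀ E₁ ∘ₗ LinearMap.inl Q E₀ E₁ = LinearMap.inl Q E₀ E₁ := by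
    ext <;> simp [parityInvolution]
  have parity_inr :
      parityInvolution Q E₀ E₁ ∘ₗ LinearMap.inr Q E₀ E₁ = -LinearMap.inr Q E₀ E₁ := by
    ext <;> simp [parityInvolution]
  refine LinearMap.ext fun x => ?_
  rw [commutator_apply, prod_apply, prod_apply, _root_.map_add, ← LinearMap.lTensor_comp_apply,
    ← LinearMap.lTensor_comp_apply, parity_inl, parity_inr]
  simp [parityInvolution, map_neg, LinearMap.lTensor_neg]

theorem atiyahClass_prod_totalDifferential (n₀ : Conn k Q E₀) (n₁ : Conn k Q E₁)
    (A : E₁ →ₗ[Q] E₀) (B : E₀ →ₗ[Q] E₁) :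
    atiyahClass (n₀.prod n₁) (totalDifferential A B)
      = LinearMap.lTensor (Ω[Q⁄k]) (LinearMap.inr Q E₀ E₁) ∘ₗ commutator n₁ n₀ B ∘ₗ
          LinearMap.fst Q E₀ E₁
        + LinearMap.lTensor (Ω[Q⁄k]) (LinearMap.inl Q E₀ E₁) ∘ₗ commutator n₀ n₁ A ∘ₗ
          LinearMap.snd Q E₀ E₁ := by
  have d_inl : totalDifferential A B ∘ₗ LinearMap.inl Q E₀ E₁ = LinearMap.inr Q E₀ E₁ ∘ₗ B := by
    ext <;> simp [totalDifferential]
  have d_inr : totalDifferential A B ∘ₗ LinearMap.inr Q E₀ E₁ = LinearMap.inl Q E₀ E₁ ∘ₗ A := by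
    ext <;> simp [totalDifferential]
  refine LinearMap.ext fun x => ?_
  rw [atiyahClass, commutator_apply, prod_apply, prod_apply, _root_.map_add,
    ← LinearMap.lTensor_comp_apply, ← LinearMap.lTensor_comp_apply, d_inl, d_inr]
  simp only [totalDifferential, LinearMap.prod_apply, Function.prod_apply, LinearMap.add_apply,
    LinearMap.comp_apply, LinearMap.fst_apply, LinearMap.snd_apply, commutator_apply, map_sub,
    LinearMap.lTensor_comp_apply]
  abel

theorem eq_atiyahClass_prod {n₀ : Conn k Q E₀} {n₁ : Conn k Q E₁} {A : E₁ →ₗ[Q] E₀}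
    {B : E₀ →ₗ[Q] E₁} {At₁ : E₁ →ₗ[Q] Ω[Q⁄k] ⊗[Q] E₀} {At₀ : E₀ →ₗ[Q] Ω[Q⁄k] ⊗[Q] E₁}
    {At : E₀ × E₁ →ₗ[Q] Ω[Q⁄k] ⊗[Q] (E₀ × E₁)}
    (hAt₁ : ∀ e, At₁ e = n₀.toFun (A e) - LinearMap.lTensor (Ω[Q⁄k]) A (n₁.toFun e))
    (hAt₀ : ∀ e, At₀ e = n₁.toFun (B e) - LinearMap.lTensor (Ω[Q⁄k]) B (n₀.toFun e))
    (hAt : At = LinearMap.lTensor (Ω[Q⁄k]) (LinearMap.inr Q E₀ E₁) ∘ₗ At₀ ∘ₗ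
          LinearMap.fst Q E₀ E₁
        + LinearMap.lTensor (Ω[Q⁄k]) (LinearMap.inl Q E₀ E₁) ∘ₗ At₁ ∘ₗ
          LinearMap.snd Q E₀ E₁) :
    At = atiyahClass (n₀.prod n₁) (totalDifferential A B) := by
  obtain rfl : At₁ = commutator n₀ n₁ A := LinearMap.ext hAt₁
  obtain rfl : At₀ = commutator n₁ n₀ B := LinearMap.ext hAt₀
  rw [hAt, atiyahClass_prod_totalDifferential]

end Conn

theorem isStrictHom_phiTilde_atiyahClass {f : Q} {A : E₁ →ₗ[Q] E₀} {B : E₀ →ₗ[Q] E₁}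
    (hAB : ∀ y, A (B y) = f • y) (hBA : ∀ x, B (A x) = f • x)
    (n₀ : Conn k Q E₀) (n₁ : Conn k Q E₁) :
    IsStrictHom (totalDifferential A B) (parityInvolution Q E₀ E₁)
      (tensorDifferential (dTwo k Q f) (eTwo k Q) (totalDifferential A B))
      (TensorProduct.map (eTwo k Q) (parityInvolution Q E₀ E₁))
      (phiTilde (Conn.atiyahClass (n₀.prod n₁) (totalDifferential A B))) :=
  isStrictHom_phiTilde
    (Conn.atiyahClass_comp_add_lTensor_comp _ (totalDifferential_comp_self hAB hBA))
    (Conn.atiyahClass_comp_of_anticomm (Conn.commutator_prod_parityInvolution n₀ n₁)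
      (totalDifferential_comp_parityInvolution A B))

theorem phi_tilde_n_commutes_with_strict_morphisms_up_to_homotopy_general {f : Q}
    {A : E₁ →ₗ[Q] E₀} {B : E₀ →ₗ[Q] E₁}
    (hAB : ∀ y, A (B y) = f • y) (hBA : ∀ x, B (A x) = f • x)
    {C : F₁ →ₗ[Q] F₀} {D : F₀ →ₗ[Q] F₁}
    (hCD : ∀ y, C (D y) = f • y) (hDC : ∀ x, D (C x) = f • x)
    {β₀ : F₀ →ₗ[Q] E₀} {β₁ : F₁ →ₗ[Q] E₁}
    (hβ : A ∘ₗ β₁ = β₀ ∘ₗ C ∧ B ∘ₗ β₀ = β₁ ∘ₗ D)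
    (nE₀ : Conn k Q E₀) (nE₁ : Conn k Q E₁) (nF₀ : Conn k Q F₀) (nF₁ : Conn k Q F₁) (n : ℕ) :
    OddHomotopic (totalDifferential C D) (parityInvolution Q F₀ F₁)
      (deltaTw k Q (E₀ × E₁) f (totalDifferential A B) (parityInvolution Q E₀ E₁) n)
      (epsTw k Q (E₀ × E₁) (parityInvolution Q E₀ E₁) n)
      (psiTw k Q (E₀ × E₁) (Conn.atiyahClass (nE₀.prod nE₁) (totalDifferential A B)) n ∘ₗ
        LinearMap.prodMap β₀ β₁)
      (extMap k Q (E₀ × E₁) (F₀ × F₁) (LinearMap.prodMap β₀ β₁) n ∘ₗ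
        psiTw k Q (F₀ × F₁) (Conn.atiyahClass (nF₀.prod nF₁) (totalDifferential C D)) n) := by
  have β_strict := isStrictHom_prodMap hβ.1 hβ.2
  refine oddHomotopic_psiTw (isStrictHom_phiTilde_atiyahClass hAB hBA nE₀ nE₁)
    (isStrictHom_phiTilde_atiyahClass hCD hDC nF₀ nF₁) ?_ n
  exact oddHomotopic_phiTilde
    (Conn.atiyahClass_comp_sub_lTensor_comp _ _ β_strict.differential_comp)
    (Conn.commutator_comp_of_comm (Conn.commutator_prod_parityInvolution nE₀ nE₁)
      (Conn.commutator_prod_parityInvolution nF₀ nF₁) β_strict.parity_comp)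

end MatrixFactorization

theorem phi_tilde_n_commutes_with_strict_morphisms_up_to_homotopy
    (E₀ E₁ F₀ F₁ : Type u)
    [AddCommGroup E₀] [Module Q E₀] [AddCommGroup E₁] [Module Q E₁]
    [AddCommGroup F₀] [Module Q F₀] [AddCommGroup F₁] [Module Q F₁]
    [Module.Finite Q E₀] [Module.Projective Q E₀]
    [Module.Finite Q E₁] [Module.Projective Q E₁]
    [Module.Finite Q F₀] [Module.Projective Q F₀]
    [Module.Finite Q F₁] [Module.Projective Q F₁]
    (f : Q)
    -- the matrix factorization E = (E₁ -A→ E₀ -B→ E₁)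
    (A : E₁ →ₗ[Q] E₀) (B : E₀ →ₗ[Q] E₁)
    (hAB : ∀ y, A (B y) = f • y) (hBA : ∀ x, B (A x) = f • x)
    -- the matrix factorization E′ = (F₁ -C→ F₀ -D→ F₁)
    (C : F₁ →ₗ[Q] F₀) (D : F₀ →ₗ[Q] F₁)
    (hCD : ∀ y, C (D y) = f • y) (hDC : ∀ x, D (C x) = f • x)
    -- a strict morphism β : E′ → E
    (β₀ : F₀ →ₗ[Q] E₀) (β₁ : F₁ →ₗ[Q] E₁)
    (hβ : A ∘ₗ β₁ = β₀ ∘ₗ C ∧ B ∘ₗ β₀ = β₁ ∘ₗ D)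
    -- connections and Atiyah classes
    (na0 : Conn k Q E₀) (na1 : Conn k Q E₁) (nb0 : Conn k Q F₀) (nb1 : Conn k Q F₁)
    (At₁ : E₁ →ₗ[Q] Ω[Q⁄k] ⊗[Q] E₀) (At₀ : E₀ →ₗ[Q] Ω[Q⁄k] ⊗[Q] E₁)
    (hAt₁ : ∀ e, At₁ e = na0.toFun (A e) - (LinearMap.lTensor (Ω[Q⁄k]) A) (na1.toFun e))
    (hAt₀ : ∀ e, At₀ e = na1.toFun (B e) - (LinearMap.lTensor (Ω[Q⁄k]) B) (na0.toFun e))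
    (AtE : (E₀ × E₁) →ₗ[Q] Ω[Q⁄k] ⊗[Q] (E₀ × E₁))
    (hAtE : AtE = (LinearMap.lTensor (Ω[Q⁄k]) (LinearMap.inr Q E₀ E₁)) ∘ₗ At₀ ∘ₗ
          LinearMap.fst Q E₀ E₁
        + (LinearMap.lTensor (Ω[Q⁄k]) (LinearMap.inl Q E₀ E₁)) ∘ₗ At₁ ∘ₗ
          LinearMap.snd Q E₀ E₁)
    (Bt₁ : F₁ →ₗ[Q] Ω[Q⁄k] ⊗[Q] F₀) (Bt₀ : F₀ →ₗ[Q] Ω[Q⁄k] ⊗[Q] F₁)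
    (hBt₁ : ∀ e, Bt₁ e = nb0.toFun (C e) - (LinearMap.lTensor (Ω[Q⁄k]) C) (nb1.toFun e))
    (hBt₀ : ∀ e, Bt₀ e = nb1.toFun (D e) - (LinearMap.lTensor (Ω[Q⁄k]) D) (nb0.toFun e))
    (AtF : (F₀ × F₁) →ₗ[Q] Ω[Q⁄k] ⊗[Q] (F₀ × F₁))
    (hAtF : AtF = (LinearMap.lTensor (Ω[Q⁄k]) (LinearMap.inr Q F₀ F₁)) ∘ₗ Bt₀ ∘ₗ
          LinearMap.fst Q F₀ F₁
        + (LinearMap.lTensor (Ω[Q⁄k]) (LinearMap.inl Q F₀ F₁)) ∘ₗ Bt₁ ∘ₗ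
          LinearMap.snd Q F₀ F₁)
    (n : ℕ) (hn : 1 ≤ n) :
    -- the total differentials, involutions and β on the underlying ℤ/2-graded modules
    ∀ (dE : (E₀ × E₁) →ₗ[Q] (E₀ × E₁)) (dF : (F₀ × F₁) →ₗ[Q] (F₀ × F₁))
      (βt : (F₀ × F₁) →ₗ[Q] (E₀ × E₁)),
      dE = LinearMap.prod (A ∘ₗ LinearMap.snd Q E₀ E₁) (B ∘ₗ LinearMap.fst Q E₀ E₁) →
      dF = LinearMap.prod (C ∘ₗ LinearMap.snd Q F₀ F₁) (D ∘ₗ LinearMap.fst Q F₀ F₁) →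
      βt = LinearMap.prodMap β₀ β₁ →
      -- there is a homotopy h between φ̃ⁿ_E ∘ β and (1^{⊗n} ⊗ β) ∘ φ̃ⁿ_{E′} :
      ∃ h : (F₀ × F₁) →ₗ[Q] Tw k Q (E₀ × E₁) n,
        -- h is odd
        (h ∘ₗ (LinearMap.prodMap LinearMap.id (-LinearMap.id))
          = - (epsTw k Q (E₀ × E₁) (LinearMap.prodMap LinearMap.id (-LinearMap.id)) n) ∘ₗ h) ∧
        -- and realizes the homotopy
        (deltaTw k Q (E₀ × E₁) f dE (LinearMap.prodMap LinearMap.id (-LinearMap.id)) n ∘ₗ h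
            + h ∘ₗ dF
          = psiTw k Q (E₀ × E₁) AtE n ∘ₗ βt
            - extMap k Q (E₀ × E₁) (F₀ × F₁) βt n ∘ₗ psiTw k Q (F₀ × F₁) AtF n) := by
  rintro _ _ _ rfl rfl rfl
  exact Conn.eq_atiyahClass_prod hAt₁ hAt₀ hAtE ▸ Conn.eq_atiyahClass_prod hBt₁ hBt₀ hAtF ▸
    phi_tilde_n_commutes_with_strict_morphisms_up_to_homotopy_general
      hAB hBA hCD hDC hβ na0 na1 nb0 nb1 n
end
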